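/- Let K and L be number fields with rings of integers 𝓞_K and 𝓞_L, and let 𝔪 be a nonzero ideal of 𝓞_K and 𝔫 a nonzero ideal of 𝓞_L. Suppose that for every real s > 1, Σ_{I} N(I)^{−s} = Σ_{J} N(J)^{−s}, where the left sum is over all nonzero ideals I of 𝓞_K with I + 𝔪 = 𝓞_K and the right sum is over all nonzero ideals J of 𝓞_L with J + 𝔫 = 𝓞_L. Then for every real s > 1, Σ_{I} N(I)^{−s} = Σ_{J} N(J)^{−s}, where now the sums run over all nonzero ideals I of 𝓞_K and all nonzero ideals J of 𝓞_L; that is, the Dedekind zeta functions of K and L agree on (1,∞). -/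

import Mathlib

open scoped NumberField
open IsDedekindDomain
open Filter Topology

/-- A finite group acting on a commutative ring `B` permutes the homomorphisms from `B` to a
domain transitively, as soon as they agree on the invariants: pointwise version. -/
theorem exists_apply_eq_apply_smul {B Ω G : Type*} [CommRing B] [CommRing Ω] [IsDomain Ω]
    [Group G] [Finite G] [MulSemiringAction G B] (z z' : B →+* Ω)
    (h : ∀ b : B, (∀ g : G, g • b = b) → z b = z' b) (b : B) :
    ∃ g : G, z' b = z (g • b) := by
  classical
  cases nonempty_fintype G
  have key : (MulSemiringAction.charpoly G b).map z = (MulSemiringAction.charpoly G b).map z' := by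
    ext n
    rw [Polynomial.coeff_map, Polynomial.coeff_map]
    exact h _ fun g ↦ MulSemiringAction.smul_coeff_charpoly b n g
  have h0 : ((MulSemiringAction.charpoly G b).map z').eval (z' b) = 0 := by
    rw [Polynomial.eval_map_apply, MulSemiringAction.eval_charpoly, map_zero]
  rw [← key, MulSemiringAction.charpoly_eq, Polynomial.map_prod, Polynomial.eval_prod,
    Finset.prod_eq_zero_iff] at h0
  obtain ⟨g, -, hg⟩ := h0
  refine ⟨g, ?_⟩
  simpa [sub_eq_zero] using hg

/-- A finite group acting on a commutative ring `B` permutes transitively the homomorphisms from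
`B` to a domain with a given restriction to the invariants. -/
theorem exists_forall_apply_eq_apply_smul {B Ω G : Type*} [CommRing B] [CommRing Ω] [IsDomain Ω]
    [Group G] [Finite G] [MulSemiringAction G B] (z z' : B →+* Ω)
    (h : ∀ b : B, (∀ g : G, g • b = b) → z b = z' b) :
    ∃ g : G, ∀ b, z' b = z (g • b) := by
  by_contra! hcon
  choose b hb using hcon
  cases nonempty_fintype G
  let e := Fintype.equivFin G
  let f : Polynomial B := ∑ g : G, Polynomial.monomial (e g : ℕ) (b g)
  have hf : ∀ g, f.coeff (e g) = b g := by
    intro g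
    simp only [f, Polynomial.finsetSum_coeff, Polynomial.coeff_monomial]
    rw [Finset.sum_eq_single g]
    · simp
    · intro g' _ hg'
      rw [if_neg]
      intro h'
      exact hg' (e.injective (Fin.ext h'))
    · simp
  obtain ⟨g, hg⟩ := exists_apply_eq_apply_smul (G := G) (Polynomial.mapRingHom z)
    (Polynomial.mapRingHom z') (fun F hF ↦ by
      ext n
      simp only [Polynomial.coe_mapRingHom, Polynomial.coeff_map]
      exact h _ fun g ↦ by rw [← Polynomial.coeff_smul, hF g]) f
  have := congrArg (fun F ↦ Polynomial.coeff F (e g)) hg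
  simp only [Polynomial.coe_mapRingHom, Polynomial.coeff_map, Polynomial.coeff_smul, hf] at this
  exact hb g this

/-- Homomorphisms to an algebraically closed field extend along integral extensions. -/
theorem exists_comp_algebraMap_eq {R S Ω : Type*} [CommRing R] [CommRing S] [Algebra R S]
    [Algebra.IsIntegral R S] [FaithfulSMul R S] [Field Ω] [IsAlgClosed Ω] (φ : R →+* Ω) :
    ∃ ψ : S →+* Ω, ψ.comp (algebraMap R S) = φ := by
  have hP : (RingHom.ker φ).IsPrime := RingHom.ker_isPrime φ
  obtain ⟨Q, -, hQ, hQP⟩ := Ideal.exists_ideal_over_prime_of_isIntegral (S := S)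
    (RingHom.ker φ) ⊥ (by
      intro x hx
      rw [Ideal.mem_comap, Ideal.mem_bot, FaithfulSMul.algebraMap_eq_zero_iff] at hx
      simp [hx])
  have hlo : Q.LiesOver (RingHom.ker φ) := ⟨hQP.symm⟩
  let : Algebra (R ⧸ RingHom.ker φ) Ω := (RingHom.kerLift φ).toAlgebra
  have : FaithfulSMul (R ⧸ RingHom.ker φ) Ω :=
    (faithfulSMul_iff_algebraMap_injective _ _).mpr (RingHom.kerLift_injective φ)
  have : FaithfulSMul (R ⧸ RingHom.ker φ) (S ⧸ Q) := Ideal.Quotient.instFaithfulSMul ..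
  have : Module.IsTorsionFree (R ⧸ RingHom.ker φ) (S ⧸ Q) := FaithfulSMul.to_isTorsionFree _ _
  let L : (S ⧸ Q) →ₐ[R ⧸ RingHom.ker φ] Ω := IsAlgClosed.lift
  refine ⟨L.toRingHom.comp (Ideal.Quotient.mk Q), ?_⟩
  ext x
  have := L.commutes (Ideal.Quotient.mk _ x)
  exact this

/-- Counting the solutions of `F z = u • z` with `u` in a finite group acting on `Z`: up to the
order of the group, this is the number of orbits stable under `F`. -/
theorem card_smul_eq_apply {U Z Y : Type*} [Group U] [Finite U] [MulAction U Z] [Finite Z]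
    (F : Z → Z) (π : Z → Y) (hπ : Function.Surjective π)
    (h : ∀ z z', π z = π z' ↔ ∃ u : U, z' = u • z) (Fix : Set Y)
    (hFix : ∀ z, π z ∈ Fix ↔ π z = π (F z)) :
    ∑ᶠ u : U, Nat.card {z : Z // F z = u • z} = Nat.card U * Nat.card Fix := by
  classical
  cases nonempty_fintype U
  cases nonempty_fintype Z
  have : Finite Y := Finite.of_surjective π hπ
  cases nonempty_fintype Y
  have hcard : ∀ z, π z ∈ Fix → ((Finset.univ.filter fun z' ↦ π z' = π z).card : ℚ) *
      (Finset.univ.filter fun u : U ↦ F z = u • z).card = Fintype.card U := by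
    intro z hz
    rw [hFix, h] at hz
    obtain ⟨v, hv⟩ := hz
    have h1 : (Finset.univ.filter fun z' ↦ π z' = π z).card =
        Fintype.card (MulAction.orbit U z) := by
      rw [Fintype.card_subtype]
      congr 1
      ext z'
      simp only [Finset.mem_filter, Finset.mem_univ, true_and, MulAction.mem_orbit_iff]
      rw [eq_comm, h]
      exact exists_congr fun u ↦ eq_comm
    have h2 : (Finset.univ.filter fun u : U ↦ F z = u • z).card =
        Fintype.card (MulAction.stabilizer U z) := by
      rw [← Fintype.card_subtype]
      refine Fintype.card_congr ((Equiv.mulLeft v⁻¹).subtypeEquiv fun u ↦ ?_)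
      rw [MulAction.mem_stabilizer_iff, Equiv.coe_mulLeft, mul_smul, inv_smul_eq_iff, hv, eq_comm]
    rw [h1, h2]
    exact_mod_cast MulAction.card_orbit_mul_card_stabilizer_eq_card_group U z
  have hzero : ∀ z, π z ∉ Fix → (Finset.univ.filter fun u : U ↦ F z = u • z).card = 0 := by
    intro z hz
    rw [hFix, h] at hz
    rw [Finset.card_eq_zero, Finset.filter_eq_empty_iff]
    exact fun u _ hu ↦ hz ⟨u, hu⟩
  have hsum : ∀ y, (∑ z ∈ Finset.univ.filter fun z ↦ π z = y,
      ((Finset.univ.filter fun u : U ↦ F z = u • z).card : ℚ)) =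
        if y ∈ Fix then (Fintype.card U : ℚ) else 0 := by
    intro y
    split_ifs with hy
    · obtain ⟨z₀, rfl⟩ := hπ y
      have hne : ((Finset.univ.filter fun z' ↦ π z' = π z₀).card : ℚ) ≠ 0 := by
        rw [Nat.cast_ne_zero]
        exact (Finset.card_pos.mpr ⟨z₀, by simp⟩).ne'
      rw [Finset.sum_congr rfl (g := fun _ ↦ (Fintype.card U : ℚ) /
        (Finset.univ.filter fun z' ↦ π z' = π z₀).card)]
      · rw [Finset.sum_const, nsmul_eq_mul]
        field_simp
      · intro z hz
        simp only [Finset.mem_filter, Finset.mem_univ, true_and] at hz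
        rw [eq_div_iff hne, mul_comm, ← hz]
        exact hcard z (hz ▸ hy)
    · refine Finset.sum_eq_zero fun z hz ↦ ?_
      simp only [Finset.mem_filter, Finset.mem_univ, true_and] at hz
      rw [hzero z (hz ▸ hy), Nat.cast_zero]
  rw [finsum_eq_sum_of_fintype]
  have : (∑ u : U, (Nat.card {z : Z // F z = u • z} : ℚ)) = Fintype.card U * Nat.card Fix := by
    simp_rw [Nat.card_eq_fintype_card, Fintype.card_subtype]
    simp_rw [Finset.card_filter] 
    push_cast
    rw [Finset.sum_comm, ← Finset.sum_fiberwise Finset.univ π]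
    simp_rw [Finset.card_filter] at hsum
    push_cast at hsum
    rw [Finset.sum_congr rfl fun y _ ↦ hsum y, ← Finset.sum_filter, Finset.sum_const, nsmul_eq_mul,
      mul_comm]
    congr 1
    rw [← Fintype.card_subtype]
    simp
  rw [Nat.card_eq_fintype_card (α := U)]
  exact_mod_cast this

/-- The number of homomorphisms from `R` to an algebraic closure of `𝔽_p` which land in the
subfield with `p ^ k` elements. -/
noncomputable def finiteFieldPointCount (R : Type*) [CommRing R] (p : ℕ) [Fact p.Prime] (k : ℕ) :
    ℕ :=
  Nat.card {φ : R →+* AlgebraicClosure (ZMod p) // ∀ x, φ x ^ p ^ k = φ x}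

theorem finiteFieldPointCount_congr {R S : Type*} [CommRing R] [CommRing S] (e : R ≃+* S)
    (p : ℕ) [Fact p.Prime] (k : ℕ) :
    finiteFieldPointCount R p k = finiteFieldPointCount S p k := by
  refine Nat.card_congr
    { toFun φ := ⟨φ.1.comp e.symm, fun x ↦ φ.2 _⟩
      invFun φ := ⟨φ.1.comp e, fun x ↦ φ.2 _⟩
      left_inv φ := by ext; simp
      right_inv φ := by ext; simp }

section Galois

variable {N : Type*} [Field N] [NumberField N]

/-- The number of homomorphisms `z` from `𝓞 N` to an algebraic closure of `𝔽_p` for which `g`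
acts as the inverse of the `p ^ k`-power Frobenius. -/
noncomputable def frobeniusSolutionCount (p : ℕ) [Fact p.Prime] (k : ℕ) (g : N ≃ₐ[ℚ] N) : ℕ :=
  Nat.card {z : 𝓞 N →+* AlgebraicClosure (ZMod p) // ∀ b, z (g • b) ^ p ^ k = z b}

theorem smul_algebraMap_ringOfIntegers_fixedField (U : Subgroup (N ≃ₐ[ℚ] N)) (u : U)
    (x : 𝓞 (IntermediateField.fixedField U)) :
    u • (algebraMap (𝓞 (IntermediateField.fixedField U)) (𝓞 N) x) = algebraMap _ (𝓞 N) x := by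
  ext
  exact x.1.2 u

theorem exists_algebraMap_eq_of_smul_eq (U : Subgroup (N ≃ₐ[ℚ] N)) (b : 𝓞 N)
    (hb : ∀ u : U, u • b = b) :
    ∃ x : 𝓞 (IntermediateField.fixedField U), algebraMap _ (𝓞 N) x = b := by
  have hmem : (b : N) ∈ IntermediateField.fixedField U := fun u ↦
    congrArg (algebraMap (𝓞 N) N) (hb u)
  have hintegral : IsIntegral ℤ (⟨b, hmem⟩ : IntermediateField.fixedField U) := by
    have := b.isIntegral_coe
    rwa [← isIntegral_algebraMap_iff (A := IntermediateField.fixedField U) (B := N)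
      (FaithfulSMul.algebraMap_injective _ _)]
  exact ⟨⟨⟨b, hmem⟩, hintegral⟩, by ext; rfl⟩

/-- Two homomorphisms from `𝓞 N` to a domain that agree on the integers of the fixed field of `U`
are conjugate under `U`. -/
theorem exists_mem_forall_apply_eq {Ω : Type*} [CommRing Ω] [IsDomain Ω]
    (U : Subgroup (N ≃ₐ[ℚ] N)) (z z' : 𝓞 N →+* Ω)
    (h : ∀ x : 𝓞 (IntermediateField.fixedField U),
      z (algebraMap _ (𝓞 N) x) = z' (algebraMap _ (𝓞 N) x)) :
    ∃ u : U, ∀ b, z' b = z (u • b) := by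
  refine exists_forall_apply_eq_apply_smul z z' fun b hb ↦ ?_
  obtain ⟨x, rfl⟩ := exists_algebraMap_eq_of_smul_eq U b hb
  exact h x

variable [IsGalois ℚ N]

theorem exists_intCast_eq_of_smul_eq (b : 𝓞 N) (hb : ∀ g : N ≃ₐ[ℚ] N, g • b = b) :
    ∃ n : ℤ, (n : 𝓞 N) = b := by
  have h1 : (b : N) ∈ IntermediateField.fixedField (⊤ : Subgroup (N ≃ₐ[ℚ] N)) := fun u ↦
    congrArg (algebraMap (𝓞 N) N) (hb u)
  rw [InfiniteGalois.fixedField_bot, IntermediateField.mem_bot] at h1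
  obtain ⟨r, hr⟩ := h1
  have : IsIntegral ℤ r := by
    rw [← isIntegral_algebraMap_iff (A := ℚ) (B := N) (FaithfulSMul.algebraMap_injective _ _), hr]
    exact b.isIntegral_coe
  obtain ⟨n, rfl⟩ := IsIntegrallyClosed.algebraMap_eq_of_integral this
  refine ⟨n, ?_⟩
  ext
  rw [← hr]
  simp

theorem exists_forall_apply_eq_apply_galois_smul {Ω : Type*} [CommRing Ω] [IsDomain Ω]
    (z z' : 𝓞 N →+* Ω) : ∃ g : N ≃ₐ[ℚ] N, ∀ b, z' b = z (g • b) := by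
  refine exists_forall_apply_eq_apply_smul z z' fun b hb ↦ ?_
  obtain ⟨n, rfl⟩ := exists_intCast_eq_of_smul_eq b hb
  simp

instance {Ω : Type*} [CommRing Ω] [IsDomain Ω] : Finite (𝓞 N →+* Ω) := by
  rcases isEmpty_or_nonempty (𝓞 N →+* Ω) with h | ⟨⟨z⟩⟩
  · infer_instance
  · refine Finite.of_surjective (fun g : N ≃ₐ[ℚ] N ↦
      z.comp (MulSemiringAction.toRingHom (N ≃ₐ[ℚ] N) (𝓞 N) g)) fun z' ↦ ?_
    obtain ⟨g, hg⟩ := exists_forall_apply_eq_apply_galois_smul z z'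
    exact ⟨g, RingHom.ext fun b ↦ (hg b).symm⟩

theorem card_mul_finiteFieldPointCount_fixedField (p : ℕ) [Fact p.Prime] (k : ℕ)
    (U : Subgroup (N ≃ₐ[ℚ] N)) :
    Nat.card U * finiteFieldPointCount (𝓞 (IntermediateField.fixedField U)) p k =
      ∑ᶠ u : U, frobeniusSolutionCount p k (u : N ≃ₐ[ℚ] N) := by
  set Ω := AlgebraicClosure (ZMod p)
  let act : MulAction U (𝓞 N →+* Ω) :=
    { smul u z := z.comp (MulSemiringAction.toRingHom U (𝓞 N) u⁻¹)
      one_smul z := by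
        refine RingHom.ext fun b ↦ ?_
        change z ((1 : U)⁻¹ • b) = z b
        simp
      mul_smul u v z := by
        refine RingHom.ext fun b ↦ ?_
        change z ((u * v)⁻¹ • b) = z (v⁻¹ • u⁻¹ • b)
        rw [mul_inv_rev, mul_smul] }
  have hact : ∀ (u : U) (z : 𝓞 N →+* Ω) (b : 𝓞 N), (u • z) b = z (u⁻¹ • b) := fun _ _ _ ↦ rfl
  have key := card_smul_eq_apply (U := U) (fun z : 𝓞 N →+* Ω ↦ (iterateFrobenius Ω p k).comp z)
    (fun z ↦ z.comp (algebraMap (𝓞 (IntermediateField.fixedField U)) (𝓞 N)))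
    (fun φ ↦ exists_comp_algebraMap_eq φ) (fun z z' ↦ ?_)
    {φ | ∀ x, φ x ^ p ^ k = φ x} (fun z ↦ ?_)
  · rw [finiteFieldPointCount]
    refine key.symm.trans (finsum_congr fun u ↦ ?_)
    refine Nat.card_congr (Equiv.subtypeEquivRight fun z ↦ ?_)
    rw [RingHom.ext_iff]
    constructor
    · intro h b
      have := h (u • b)
      rw [hact, inv_smul_smul] at this
      exact this
    · intro h b
      rw [hact, ← h (u⁻¹ • b)]
      change z b ^ p ^ k = z (u • u⁻¹ • b) ^ p ^ k
      rw [smul_inv_smul]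
  · constructor
    · intro h
      obtain ⟨u, hu⟩ := exists_mem_forall_apply_eq U z z' fun x ↦ DFunLike.congr_fun h x
      exact ⟨u⁻¹, RingHom.ext fun b ↦ by rw [hu, hact, inv_inv]⟩
    · rintro ⟨u, rfl⟩
      refine RingHom.ext fun x ↦ ?_
      change z (algebraMap _ (𝓞 N) x) = z (u⁻¹ • algebraMap _ (𝓞 N) x)
      rw [smul_algebraMap_ringOfIntegers_fixedField]
  · rw [RingHom.ext_iff]
    exact forall_congr' fun x ↦ eq_comm

end Galois

section ConjugationCount

variable {G : Type*} [Group G] [Fintype G]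

open Classical in
/-- The number of elements `t` conjugating `g` into the subgroup `U`: the order of `U` times the
permutation character of `G ⧸ U`. -/
noncomputable def conjCount (U : Subgroup G) (g : G) : ℝ :=
  ∑ t : G, if t⁻¹ * g * t ∈ U then 1 else 0

theorem conjCount_conj (U : Subgroup G) (g x : G) :
    conjCount U (x⁻¹ * g * x) = conjCount U g := by
  classical
  unfold conjCount
  refine Fintype.sum_equiv (Equiv.mulLeft x) _ _ fun t ↦ ?_
  simp [mul_assoc]

theorem sum_mul_conjCount (U : Subgroup G) [Fintype U] (c : G → ℝ)
    (hc : ∀ g x, c (x⁻¹ * g * x) = c g) :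
    ∑ g, c g * conjCount U g = Fintype.card G * ∑ u : U, c u := by
  classical
  simp_rw [conjCount, Finset.mul_sum]
  rw [Finset.sum_comm]
  have : ∀ t : G, (∑ g : G, c g * if t⁻¹ * g * t ∈ U then 1 else 0) = ∑ u : U, c u := by
    intro t
    rw [← Fintype.sum_equiv (MulAut.conj t).toEquiv
      (fun g ↦ c g * if g ∈ U then 1 else 0)]
    · simp only [mul_ite, mul_one, mul_zero]
      rw [← Finset.sum_filter, Finset.sum_subtype (p := fun x ↦ x ∈ U)]
      simp
    · intro g
      have h := hc (t * g * t⁻¹) t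
      simp only [MulEquiv.toEquiv_eq_coe, MulEquiv.coe_toEquiv, MulAut.conj_apply]
      rw [← h]
      simp [mul_assoc]
  rw [Finset.sum_congr rfl fun t _ ↦ this t]
  simp [Finset.mul_sum]

/-- The average over `G` of `conjCount U` is the order of `U`. -/
theorem sum_conjCount (U : Subgroup G) :
    ∑ g, conjCount U g = Fintype.card G * (Nat.card U : ℝ) := by
  classical
  have := sum_mul_conjCount U (fun _ ↦ 1) (fun _ _ ↦ rfl)
  simpa using this

/-- A product of two functions `conjCount` is a combination of functions `conjCount`. -/
theorem card_mul_conjCount_mul_conjCount (U V : Subgroup G) (g : G) :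
    Fintype.card G * (conjCount U g * conjCount V g) =
      ∑ x : G, ∑ y : G, conjCount
        (U.comap (MulAut.conj x).toMonoidHom ⊓ V.comap (MulAut.conj y).toMonoidHom) g := by
  classical
  have h : ∀ t : G, conjCount U g * conjCount V g =
      ∑ x : G, ∑ y : G, if t⁻¹ * g * t ∈ (U.comap (MulAut.conj x).toMonoidHom ⊓
        V.comap (MulAut.conj y).toMonoidHom) then (1 : ℝ) else 0 := by
    intro t
    rw [← conjCount_conj U g t, ← conjCount_conj V g t, conjCount, conjCount, Finset.sum_mul_sum]
    refine Fintype.sum_equiv (Equiv.inv G) _ _ fun x ↦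
      Fintype.sum_equiv (Equiv.inv G) _ _ fun y ↦ ?_
    simp only [Subgroup.mem_inf, Subgroup.mem_comap, MulEquiv.coe_toMonoidHom, MulAut.conj_apply,
      Equiv.inv_apply, inv_inv, ← ite_and, mul_ite, mul_one, mul_zero]
    congr 1
    rw [and_comm]
  have h2 : Fintype.card G * (conjCount U g * conjCount V g) =
      ∑ t : G, conjCount U g * conjCount V g := by simp
  rw [h2, Finset.sum_congr rfl fun t _ ↦ h t, Finset.sum_comm]
  refine Finset.sum_congr rfl fun x _ ↦ ?_
  rw [Finset.sum_comm]
  rfl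

end ConjugationCount

section Galois

variable {N : Type*} [Field N] [NumberField N]

theorem frobeniusSolutionCount_conj (p : ℕ) [Fact p.Prime] (k : ℕ) (g x : N ≃ₐ[ℚ] N) :
    frobeniusSolutionCount p k (x⁻¹ * g * x) = frobeniusSolutionCount p k g := by
  let τ (y : N ≃ₐ[ℚ] N) := MulSemiringAction.toRingHom (N ≃ₐ[ℚ] N) (𝓞 N) y
  refine Nat.card_congr
    { toFun z := ⟨z.1.comp (τ x⁻¹), fun b ↦ ?_⟩
      invFun z := ⟨z.1.comp (τ x), fun b ↦ ?_⟩
      left_inv z := ?_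
      right_inv z := ?_ }
  · have := z.2 (x⁻¹ • b)
    change z.1 (x⁻¹ • g • b) ^ p ^ k = z.1 (x⁻¹ • b)
    rw [← this]
    simp [mul_smul]
  · have := z.2 (x • b)
    change z.1 (x • (x⁻¹ * g * x) • b) ^ p ^ k = z.1 (x • b)
    rw [← this]
    simp [mul_smul]
  · ext b
    change z.1 (x⁻¹ • x • b) = z.1 b
    rw [inv_smul_smul]
  · ext b
    change z.1 (x • x⁻¹ • b) = z.1 b
    rw [smul_inv_smul]

variable [IsGalois ℚ N]

theorem card_mul_card_mul_finiteFieldPointCount (p : ℕ) [Fact p.Prime] (k : ℕ)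
    (U : Subgroup (N ≃ₐ[ℚ] N)) :
    Fintype.card (N ≃ₐ[ℚ] N) *
        ((Nat.card U : ℝ) * finiteFieldPointCount (𝓞 (IntermediateField.fixedField U)) p k) =
      ∑ g : N ≃ₐ[ℚ] N, (frobeniusSolutionCount p k g : ℝ) * conjCount U g := by
  classical
  rw [sum_mul_conjCount U _ fun g x ↦ by rw [frobeniusSolutionCount_conj]]
  have := card_mul_finiteFieldPointCount_fixedField p k U
  rw [finsum_eq_sum_of_fintype] at this
  rw [← Nat.cast_mul, this, Nat.cast_sum]

/-- At a prime where the Galois group acts freely on the points of `𝓞 N`, the number of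
`𝔽_p`-points of all fixed fields is computed by a single Galois automorphism. -/
theorem exists_card_mul_finiteFieldPointCount_eq_conjCount (p : ℕ) [Fact p.Prime]
    (hp : ∀ (z : 𝓞 N →+* AlgebraicClosure (ZMod p)) (g : N ≃ₐ[ℚ] N),
      (∀ b, z (g • b) = z b) → g = 1) :
    ∃ τ : N ≃ₐ[ℚ] N, ∀ U : Subgroup (N ≃ₐ[ℚ] N),
      (Nat.card U : ℝ) * finiteFieldPointCount (𝓞 (IntermediateField.fixedField U)) p 1 =
        conjCount U τ := by
  classical
  obtain ⟨z₀, -⟩ := exists_comp_algebraMap_eq (S := 𝓞 N)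
    (Int.castRingHom (AlgebraicClosure (ZMod p)))
  obtain ⟨σ, hσ⟩ := exists_forall_apply_eq_apply_galois_smul z₀
    ((frobenius (AlgebraicClosure (ZMod p)) p).comp z₀)
  have hσ' : ∀ b, z₀ b ^ p = z₀ (σ • b) := hσ
  have hcount : ∀ g : N ≃ₐ[ℚ] N, frobeniusSolutionCount p 1 g =
      Fintype.card {x : N ≃ₐ[ℚ] N // x⁻¹ * σ⁻¹ * x = g} := by
    intro g
    rw [← Nat.card_eq_fintype_card, eq_comm]
    refine Nat.card_eq_of_bijective (fun x ↦ ⟨z₀.comp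
      (MulSemiringAction.toRingHom (N ≃ₐ[ℚ] N) (𝓞 N) x.1), fun b ↦ ?_⟩) ⟨fun x y hxy ↦ ?_,
        fun z ↦ ?_⟩
    · change z₀ (x.1 • g • b) ^ p ^ 1 = z₀ (x.1 • b)
      obtain ⟨x, rfl⟩ := x
      rw [pow_one, hσ']
      simp [mul_smul]
    · have h1 : ∀ b, z₀ (x.1 • b) = z₀ (y.1 • b) := fun b ↦
        DFunLike.congr_fun (Subtype.ext_iff.mp hxy) b
      have := hp z₀ (x.1 * y.1⁻¹) fun b ↦ by rw [mul_smul, h1, smul_inv_smul]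
      exact Subtype.ext (mul_inv_eq_one.mp this)
    · obtain ⟨x, hx⟩ := exists_forall_apply_eq_apply_galois_smul z₀ z.1
      refine ⟨⟨x, ?_⟩, Subtype.ext (RingHom.ext fun b ↦ (hx b).symm)⟩
      have := hp z₀ (σ * x * g * x⁻¹) fun b ↦ by
        have h2 := z.2 (x⁻¹ • b)
        rw [hx, hx, pow_one, hσ', smul_inv_smul] at h2
        rw [← h2]
        simp [mul_smul]
      rw [mul_inv_eq_one] at this
      rw [mul_assoc, inv_mul_eq_iff_eq_mul, inv_mul_eq_iff_eq_mul, ← mul_assoc, this]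
  refine ⟨σ⁻¹, fun U ↦ ?_⟩
  have hne : (Fintype.card (N ≃ₐ[ℚ] N) : ℝ) ≠ 0 := by simp
  refine mul_left_cancel₀ hne ?_
  rw [card_mul_card_mul_finiteFieldPointCount]
  simp_rw [hcount, Fintype.card_subtype, Finset.card_filter, Nat.cast_sum, Finset.sum_mul]
  rw [Finset.sum_comm]
  simp [conjCount_conj]

/-- Away from finitely many primes, the Galois group acts freely on the points of `𝓞 N`. -/
theorem exists_forall_not_dvd_smul_free (N : Type*) [Field N] [NumberField N] :
    ∃ D : ℕ, D ≠ 0 ∧ ∀ (p : ℕ) [Fact p.Prime], ¬ p ∣ D →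
      ∀ (z : 𝓞 N →+* AlgebraicClosure (ZMod p)) (g : N ≃ₐ[ℚ] N),
        (∀ b, z (g • b) = z b) → g = 1 := by
  classical
  have hex : ∀ g : N ≃ₐ[ℚ] N, ∃ b : 𝓞 N, g ≠ 1 → g • b - b ≠ 0 := by
    intro g
    by_contra! hcon
    refine (hcon 0).1 (AlgEquiv.ext fun x ↦ ?_)
    obtain ⟨a, b, hb, rfl⟩ := IsFractionRing.div_surjective (A := 𝓞 N) x
    have ha := congrArg (algebraMap (𝓞 N) N) (sub_eq_zero.mp (hcon a).2)
    have hb := congrArg (algebraMap (𝓞 N) N) (sub_eq_zero.mp (hcon b).2)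
    change g (algebraMap (𝓞 N) N a) = algebraMap (𝓞 N) N a at ha
    change g (algebraMap (𝓞 N) N b) = algebraMap (𝓞 N) N b at hb
    rw [map_div₀, ha, hb]
    rfl
  choose b hb using hex
  let x : 𝓞 N := ∏ g ∈ Finset.univ.filter fun g : N ≃ₐ[ℚ] N ↦ g ≠ 1, (g • b g - b g)
  have hx : x ≠ 0 := Finset.prod_ne_zero_iff.mpr fun g hg ↦ hb g (by simpa using hg)
  refine ⟨Ideal.absNorm (Ideal.span {x}), by simpa [Ideal.absNorm_eq_zero_iff] using hx, ?_⟩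
  intro p _ hp z g hg
  by_contra hg1
  apply hp
  have hzx : z x = 0 := by
    rw [map_prod]
    refine Finset.prod_eq_zero (i := g) (by simpa using hg1) ?_
    rw [map_sub, hg, sub_self]
  obtain ⟨y, hy⟩ := Ideal.mem_span_singleton.mp (Ideal.absNorm_mem (Ideal.span {x}))
  have h0 := congrArg z hy
  rwa [map_mul, hzx, zero_mul, map_natCast, CharP.cast_eq_zero_iff _ p] at h0

end Galois

theorem natCard_ringHom_algebraicClosure_zmod {F : Type*} [Field F] [Finite F] {p f : ℕ}
    [Fact p.Prime] (hF : Nat.card F = p ^ f) :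
    Nat.card (F →+* AlgebraicClosure (ZMod p)) = f := by
  cases nonempty_fintype F
  have : CharP F p := charP_of_card_eq_prime_pow (by rwa [← Nat.card_eq_fintype_card])
  let := ZMod.algebra F p
  have hfin : Module.finrank (ZMod p) F = f := by
    have := Module.natCard_eq_pow_finrank (K := ZMod p) (V := F)
    rw [hF, Nat.card_zmod] at this
    exact (Nat.pow_right_injective (Fact.out : p.Prime).two_le this).symm
  rw [← hfin, ← AlgHom.card (ZMod p) F (AlgebraicClosure (ZMod p)), ← Nat.card_eq_fintype_card]
  exact Nat.card_congr
    { toFun φ := { φ with commutes' r := RingHom.congr_fun (Subsingleton.elim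
        (φ.comp (algebraMap (ZMod p) F)) (algebraMap (ZMod p) _)) r }
      invFun φ := φ.toRingHom
      left_inv φ := rfl
      right_inv φ := rfl }

theorem forall_pow_eq_self_iff_dvd {F : Type*} [Field F] [Finite F] {p f : ℕ}
    [Fact p.Prime] (hF : Nat.card F = p ^ f) (k : ℕ) :
    (∀ x : F, x ^ p ^ k = x) ↔ f ∣ k := by
  cases nonempty_fintype F
  have : CharP F p := charP_of_card_eq_prime_pow (by rwa [← Nat.card_eq_fintype_card])
  let := ZMod.algebra F p
  have hfin : Module.finrank (ZMod p) F = f := by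
    have := Module.natCard_eq_pow_finrank (K := ZMod p) (V := F)
    rw [hF, Nat.card_zmod] at this
    exact (Nat.pow_right_injective (Fact.out : p.Prime).two_le this).symm
  rw [← hfin, ← FiniteField.orderOf_frobeniusAlgHom, orderOf_dvd_iff_pow_eq_one, AlgHom.ext_iff]
  refine forall_congr' fun x ↦ ?_
  have : ((FiniteField.frobeniusAlgHom (ZMod p) F) ^ k) x = x ^ p ^ k := by
    rw [AlgHom.coe_pow, FiniteField.coe_frobeniusAlgHom, pow_iterate, ZMod.card]
  rw [this]
  rfl

section NumberField

variable {E : Type*} [Field E] [NumberField E]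

variable (E) in
/-- The number of nonzero prime ideals of norm `q`. -/
noncomputable def primeCount (q : ℕ) : ℕ :=
  Nat.card {P : HeightOneSpectrum (𝓞 E) // Ideal.absNorm P.asIdeal = q}

instance (q : ℕ) : Finite {P : HeightOneSpectrum (𝓞 E) // Ideal.absNorm P.asIdeal = q} :=
  Set.Finite.subset (Ring.HasFiniteQuotients.finite_absNorm_heightOneSpectrum_le q)
    fun _ h ↦ le_of_eq h

theorem natCard_quotient_eq_absNorm (P : HeightOneSpectrum (𝓞 E)) :
    Nat.card (𝓞 E ⧸ P.asIdeal) = Ideal.absNorm P.asIdeal := by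
  rw [Ideal.absNorm_apply, Submodule.cardQuot_apply]

theorem finiteFieldPointCount_eq_sum_divisors (p : ℕ) [Fact p.Prime] {k : ℕ} (hk : k ≠ 0) :
    finiteFieldPointCount (𝓞 E) p k = ∑ f ∈ k.divisors, f * primeCount E (p ^ f) := by
  set Ω := AlgebraicClosure (ZMod p)
  have hfinP (P : HeightOneSpectrum (𝓞 E)) : Finite (𝓞 E ⧸ P.asIdeal) :=
    P.asIdeal.finiteQuotientOfFreeOfNeBot P.ne_bot
  let T (f : k.divisors) := {P : HeightOneSpectrum (𝓞 E) // Ideal.absNorm P.asIdeal = p ^ f.1}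
  let A := Σ f : k.divisors, Σ P : T f, (𝓞 E ⧸ P.1.asIdeal →+* Ω)
  have hker (P : HeightOneSpectrum (𝓞 E)) (ψ : 𝓞 E ⧸ P.asIdeal →+* Ω) :
      RingHom.ker (ψ.comp (Ideal.Quotient.mk P.asIdeal)) = P.asIdeal := by
    let := Ideal.Quotient.field P.asIdeal
    rw [← RingHom.comap_ker, (RingHom.injective_iff_ker_eq_bot ψ).mp (RingHom.injective ψ),
      ← RingHom.ker_eq_comap_bot, Ideal.mk_ker]
  have hcard (f : k.divisors) (P : T f) : Nat.card (𝓞 E ⧸ P.1.asIdeal →+* Ω) = f := by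
    let := Ideal.Quotient.field P.1.asIdeal
    have := hfinP P.1
    exact natCard_ringHom_algebraicClosure_zmod ((natCard_quotient_eq_absNorm _).trans P.2)
  have hfin (f : k.divisors) (P : T f) : Finite (𝓞 E ⧸ P.1.asIdeal →+* Ω) := by
    refine Nat.finite_of_card_ne_zero ?_
    rw [hcard]
    exact (Nat.pos_of_mem_divisors f.2).ne'
  have hA : Nat.card A = ∑ f ∈ k.divisors, f * primeCount E (p ^ f) := by
    rw [Nat.card_sigma, ← Finset.sum_coe_sort k.divisors fun f ↦ f * primeCount E (p ^ f)]
    refine Finset.sum_congr rfl fun f _ ↦ ?_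
    cases nonempty_fintype (T f)
    rw [Nat.card_sigma, Finset.sum_congr rfl fun P _ ↦ hcard f P, Finset.sum_const, smul_eq_mul,
      mul_comm, primeCount, Nat.card_eq_fintype_card]
    rfl
  rw [← hA, finiteFieldPointCount, eq_comm]
  refine Nat.card_eq_of_bijective (fun a ↦ ⟨a.2.2.comp (Ideal.Quotient.mk a.2.1.1.asIdeal), ?_⟩)
    ⟨?_, ?_⟩
  · obtain ⟨f, P, ψ⟩ := a
    intro x
    let := Ideal.Quotient.field P.1.asIdeal
    have := hfinP P.1
    have h := (forall_pow_eq_self_iff_dvd ((natCard_quotient_eq_absNorm _).trans P.2) k).mpr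
      (Nat.dvd_of_mem_divisors f.2) (Ideal.Quotient.mk _ x)
    change ψ _ ^ p ^ k = ψ _
    rw [← map_pow, h]
  · rintro ⟨⟨f, hf⟩, ⟨P, hP⟩, ψ⟩ ⟨⟨f', hf'⟩, ⟨P', hP'⟩, ψ'⟩ h
    have h' : ψ.comp (Ideal.Quotient.mk P.asIdeal) = ψ'.comp (Ideal.Quotient.mk P'.asIdeal) :=
      Subtype.ext_iff.mp h
    obtain rfl : P = P' := HeightOneSpectrum.ext (by rw [← hker P ψ, h', hker])
    obtain rfl : f = f' :=
      Nat.pow_right_injective (Fact.out : p.Prime).two_le (hP.symm.trans hP')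
    obtain rfl : ψ = ψ' := Ideal.Quotient.ringHom_ext h'
    rfl
  · rintro ⟨φ, hφ⟩
    have hpr : (RingHom.ker φ).IsPrime := RingHom.ker_isPrime φ
    have hpmem : (p : 𝓞 E) ∈ RingHom.ker φ := by simp [RingHom.mem_ker, CharP.cast_eq_zero]
    have hne : RingHom.ker φ ≠ ⊥ := by
      intro h
      rw [h, Ideal.mem_bot, Nat.cast_eq_zero] at hpmem
      exact (Fact.out : p.Prime).ne_zero hpmem
    let P : HeightOneSpectrum (𝓞 E) := ⟨RingHom.ker φ, hpr, hne⟩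
    have hmax : P.asIdeal.IsMaximal := P.isMaximal
    let := Ideal.Quotient.field P.asIdeal
    have := hfinP P
    let ψ : 𝓞 E ⧸ P.asIdeal →+* Ω := RingHom.kerLift φ
    have : CharP (𝓞 E ⧸ P.asIdeal) p := (RingHom.charP_iff ψ ψ.injective p).mpr inferInstance
    cases nonempty_fintype (𝓞 E ⧸ P.asIdeal)
    obtain ⟨f, -, hf⟩ := FiniteField.card (𝓞 E ⧸ P.asIdeal) p
    rw [← Nat.card_eq_fintype_card] at hf
    have hdvd : (f : ℕ) ∣ k := by
      refine (forall_pow_eq_self_iff_dvd hf k).mp fun x ↦ ψ.injective ?_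
      obtain ⟨x, rfl⟩ := Ideal.Quotient.mk_surjective x
      rw [map_pow]
      exact hφ x
    exact ⟨⟨⟨f, Nat.mem_divisors.mpr ⟨hdvd, hk⟩⟩,
      ⟨P, (natCard_quotient_eq_absNorm P).symm.trans hf⟩, ψ⟩, rfl⟩

theorem finiteFieldPointCount_one (p : ℕ) [Fact p.Prime] :
    finiteFieldPointCount (𝓞 E) p 1 = primeCount E p := by
  simp [finiteFieldPointCount_eq_sum_divisors]

theorem natCard_ideal_absNorm_eq_prime {p : ℕ} (hp : p.Prime) :
    Nat.card {I : Ideal (𝓞 E) // Ideal.absNorm I = p} = primeCount E p := by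
  refine Nat.card_congr
    { toFun I := ⟨⟨I.1, ?_, ?_⟩, I.2⟩
      invFun P := ⟨P.1.asIdeal, P.2⟩
      left_inv _ := rfl
      right_inv _ := rfl }
  · exact Ideal.isPrime_of_irreducible_absNorm (by rw [I.2]; exact hp)
  · intro h
    have := I.2
    rw [h, Ideal.absNorm_bot] at this
    exact hp.ne_zero this.symm

theorem primeCount_eq_zero_of_not_isPrimePow {q : ℕ} (hq : ¬ IsPrimePow q) :
    primeCount E q = 0 := by
  have : IsEmpty {P : HeightOneSpectrum (𝓞 E) // Ideal.absNorm P.asIdeal = q} := by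
    refine ⟨fun P ↦ hq ?_⟩
    let := Ideal.Quotient.field P.1.asIdeal
    have : Finite (𝓞 E ⧸ P.1.asIdeal) := P.1.asIdeal.finiteQuotientOfFreeOfNeBot P.1.ne_bot
    cases nonempty_fintype (𝓞 E ⧸ P.1.asIdeal)
    have := FiniteField.isPrimePow_card (𝓞 E ⧸ P.1.asIdeal)
    rwa [← Nat.card_eq_fintype_card, natCard_quotient_eq_absNorm, P.2] at this
  exact Nat.card_of_isEmpty

/-- The numbers of points over all finite fields determine the numbers of primes of given norm. -/
theorem primeCount_eq_of_finiteFieldPointCount_eq {K L : Type*} [Field K] [NumberField K]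
    [Field L] [NumberField L]
    (h : ∀ (p : ℕ) [Fact p.Prime] (k : ℕ), finiteFieldPointCount (𝓞 K) p k =
      finiteFieldPointCount (𝓞 L) p k) (q : ℕ) : primeCount K q = primeCount L q := by
  have key (p : ℕ) [Fact p.Prime] (f : ℕ) (hf : f ≠ 0) :
      primeCount K (p ^ f) = primeCount L (p ^ f) := by
    induction f using Nat.strong_induction_on with
    | _ f ih =>
      have hpf := h p f
      rw [finiteFieldPointCount_eq_sum_divisors p hf, finiteFieldPointCount_eq_sum_divisors p hf,
        ← Nat.insert_self_properDivisors hf, Finset.sum_insert Nat.self_notMem_properDivisors,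
        Finset.sum_insert Nat.self_notMem_properDivisors] at hpf
      rw [Finset.sum_congr rfl fun d hd ↦ by
        rw [ih d (Nat.mem_properDivisors.mp hd).2 (Nat.pos_of_mem_properDivisors hd).ne'],
        Nat.add_right_cancel_iff] at hpf
      exact Nat.eq_of_mul_eq_mul_left (Nat.pos_of_ne_zero hf) hpf
  by_cases hq : IsPrimePow q
  · obtain ⟨p, f, hp, hf, rfl⟩ := (isPrimePow_nat_iff q).mp hq
    have : Fact p.Prime := ⟨hp⟩
    exact key p f hf.ne'
  · rw [primeCount_eq_zero_of_not_isPrimePow hq, primeCount_eq_zero_of_not_isPrimePow hq]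

/-- Number fields with the same number of primes of each norm have norm-preserving bijections
between their primes. -/
theorem exists_equiv_absNorm_eq {K L : Type*} [Field K] [NumberField K] [Field L] [NumberField L]
    (h : ∀ q, primeCount K q = primeCount L q) :
    ∃ e : HeightOneSpectrum (𝓞 K) ≃ HeightOneSpectrum (𝓞 L),
      ∀ P, Ideal.absNorm (e P).asIdeal = Ideal.absNorm P.asIdeal := by
  have e (q : ℕ) := (Finite.card_eq.mp (h q)).some
  refine ⟨(Equiv.sigmaFiberEquiv
    fun P : HeightOneSpectrum (𝓞 K) ↦ Ideal.absNorm P.asIdeal).symm.trans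
    ((Equiv.sigmaCongrRight e).trans
      (Equiv.sigmaFiberEquiv fun P : HeightOneSpectrum (𝓞 L) ↦ Ideal.absNorm P.asIdeal)),
    fun P ↦ ?_⟩
  exact (e _ ⟨P, rfl⟩).2

end NumberField

section Fibers

variable {X : Type*}

theorem term_natCard_fiber {w : X → ℕ} (hw : ∀ x, w x ≠ 0) (s : ℝ) (n : ℕ) :
    LSeries.term (fun n ↦ (Nat.card {x // w x = n} : ℂ)) s n =
      ((Nat.card {x // w x = n} * (n : ℝ) ^ (-s) : ℝ) : ℂ) := by
  rcases eq_or_ne n 0 with rfl | hn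
  · have : IsEmpty {x // w x = 0} := ⟨fun x ↦ hw x x.2⟩
    simp
  · rw [LSeries.term_of_ne_zero hn, Complex.ofReal_mul, Complex.ofReal_cpow (Nat.cast_nonneg n),
      Complex.ofReal_neg, Complex.cpow_neg, div_eq_mul_inv]
    simp

variable (w : X → ℕ) [∀ n, Finite {x // w x = n}]

theorem hasSum_rpow_fiber (s : ℝ) (n : ℕ) :
    HasSum (fun x : {x // w x = n} ↦ (w x : ℝ) ^ (-s))
      (Nat.card {x // w x = n} * (n : ℝ) ^ (-s)) := by
  cases nonempty_fintype {x // w x = n}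
  convert hasSum_fintype _
  rw [Finset.sum_congr rfl fun x _ ↦ by rw [x.2], Finset.sum_const, nsmul_eq_mul,
    Nat.card_eq_fintype_card, Finset.card_univ]

theorem summable_rpow_iff_summable_card_mul (s : ℝ) :
    Summable (fun x ↦ (w x : ℝ) ^ (-s)) ↔
      Summable fun n : ℕ ↦ Nat.card {x // w x = n} * (n : ℝ) ^ (-s) := by
  rw [← (Equiv.sigmaFiberEquiv w).summable_iff,
    summable_sigma_of_nonneg fun i ↦ by simp only [Function.comp_apply]; positivity]
  simp only [Function.comp_apply, Equiv.sigmaFiberEquiv, Equiv.coe_fn_mk,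
    (hasSum_rpow_fiber w s _).tsum_eq, and_iff_right_iff_imp]
  exact fun _ n ↦ (hasSum_rpow_fiber w s n).summable

theorem tsum_rpow_eq_tsum_card_mul {s : ℝ} (h : Summable fun x ↦ (w x : ℝ) ^ (-s)) :
    ∑' x, (w x : ℝ) ^ (-s) = ∑' n : ℕ, Nat.card {x // w x = n} * (n : ℝ) ^ (-s) := by
  rw [← (Equiv.sigmaFiberEquiv w).tsum_eq]
  rw [← (Equiv.sigmaFiberEquiv w).summable_iff] at h
  exact (h.hasSum.sigma fun n ↦ hasSum_rpow_fiber w s n).tsum_eq.symm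

variable {w}

theorem LSeriesSummable_natCard_fiber_iff (hw : ∀ x, w x ≠ 0) (s : ℝ) :
    LSeriesSummable (fun n ↦ (Nat.card {x // w x = n} : ℂ)) s ↔
      Summable fun x ↦ (w x : ℝ) ^ (-s) := by
  rw [LSeriesSummable, funext (term_natCard_fiber hw s), Complex.summable_ofReal,
    summable_rpow_iff_summable_card_mul]

theorem LSeries_natCard_fiber (hw : ∀ x, w x ≠ 0) {s : ℝ}
    (h : Summable fun x ↦ (w x : ℝ) ^ (-s)) :
    LSeries (fun n ↦ (Nat.card {x // w x = n} : ℂ)) s = ((∑' x, (w x : ℝ) ^ (-s) : ℝ) : ℂ) := by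
  rw [LSeries, funext (term_natCard_fiber hw s), ← Complex.ofReal_tsum,
    tsum_rpow_eq_tsum_card_mul w h]

theorem abscissaOfAbsConv_natCard_fiber_lt_top (hw : ∀ x, w x ≠ 0)
    (h : ∀ s : ℝ, 1 < s → Summable fun x ↦ (w x : ℝ) ^ (-s)) :
    LSeries.abscissaOfAbsConv (fun n ↦ (Nat.card {x // w x = n} : ℂ)) < ⊤ :=
  ((LSeriesSummable_natCard_fiber_iff hw 2).mpr (h 2 one_lt_two)).abscissaOfAbsConv_le.trans_lt
    (EReal.coe_lt_top _)

/-- The Dirichlet series of a weight function determines the cardinalities of its fibers. -/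
theorem natCard_fiber_eq_of_tsum_rpow_eq {Y : Type*} {v : Y → ℕ} [∀ n, Finite {y // v y = n}]
    (hw : ∀ x, w x ≠ 0) (hv : ∀ y, v y ≠ 0)
    (hws : ∀ s : ℝ, 1 < s → Summable fun x ↦ (w x : ℝ) ^ (-s))
    (hvs : ∀ s : ℝ, 1 < s → Summable fun y ↦ (v y : ℝ) ^ (-s))
    (h : ∀ s : ℝ, 1 < s → ∑' x, (w x : ℝ) ^ (-s) = ∑' y, (v y : ℝ) ^ (-s)) {n : ℕ} (hn : n ≠ 0) :
    Nat.card {x // w x = n} = Nat.card {y // v y = n} := by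
  refine Nat.cast_injective (R := ℂ) (LSeries.eq_of_LSeries_eventually_eq
    (f := fun n ↦ (Nat.card {x // w x = n} : ℂ)) (g := fun n ↦ (Nat.card {y // v y = n} : ℂ))
    (abscissaOfAbsConv_natCard_fiber_lt_top hw hws) (abscissaOfAbsConv_natCard_fiber_lt_top hv hvs)
    ?_ hn)
  filter_upwards [eventually_gt_atTop 1] with s hs
  rw [LSeries_natCard_fiber hw (hws s hs), LSeries_natCard_fiber hv (hvs s hs), h s hs]

end Fibers

section EulerProduct

variable {ι : Type*}

theorem hasSum_indicator_finsupp_prod_pow {x : ι → ℝ} (hx : ∀ i, 0 ≤ x i) (hx1 : ∀ i, x i < 1)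
    (T : Finset ι) :
    HasSum (Set.indicator {n : ι →₀ ℕ | n.support ⊆ T} fun n ↦ n.prod fun i k ↦ x i ^ k)
      (∏ i ∈ T, (1 - x i)⁻¹) := by
  classical
  induction T using Finset.induction_on with
  | empty =>
    rw [Finset.prod_empty]
    convert hasSum_ite_eq (0 : ι →₀ ℕ) (1 : ℝ) using 1
    funext n
    by_cases hn : n = 0 <;> simp [hn]
  | insert a T ha ih =>
    rw [Finset.prod_insert ha]
    rw [← hasSum_subtype_iff_indicator] at ih ⊢
    have hg := (hasSum_geometric_of_lt_one (hx a) (hx1 a))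
    have hmul := hg.mul ih (hg.summable.mul_of_nonneg ih.summable
      (fun k ↦ pow_nonneg (hx a) k) fun n ↦ Finset.prod_nonneg fun i _ ↦ pow_nonneg (hx i) _)
    let e : {n : ι →₀ ℕ | n.support ⊆ insert a T} ≃ ℕ × {n : ι →₀ ℕ | n.support ⊆ T} :=
      { toFun n := (n.1 a, ⟨n.1.erase a, by
          have := n.2
          simp only [Set.mem_ofPred_eq, Finsupp.support_erase] at this ⊢
          grind⟩)
        invFun n := ⟨n.2.1.update a n.1, by
          have := n.2.2
          simp only [Set.mem_ofPred_eq] at this ⊢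
          exact Finset.Subset.trans (Finsupp.support_update_subset _ _) (by grind)⟩
        left_inv n := by ext; simp
        right_inv n := by
          have : n.2.1 a = 0 := by
            have := n.2.2
            simp only [Set.mem_ofPred_eq] at this
            by_contra h
            exact ha (this (Finsupp.mem_support_iff.mpr h))
          ext <;> simp [this] }
    rw [← e.hasSum_iff] at hmul
    refine hmul.congr_fun fun n ↦ ?_
    simpa [e] using (Finsupp.mul_prod_erase' n.1 a _ fun i ↦ pow_zero (x i)).symm

/-- The Euler product over exponent vectors. -/
theorem hasProd_inv_one_sub {x : ι → ℝ} (hx : ∀ i, 0 ≤ x i) (hx1 : ∀ i, x i < 1)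
    (hs : Summable fun n : ι →₀ ℕ ↦ n.prod fun i k ↦ x i ^ k) :
    HasProd (fun i ↦ (1 - x i)⁻¹) (∑' n : ι →₀ ℕ, n.prod fun i k ↦ x i ^ k) := by
  rw [HasProd, SummationFilter.unconditional_filter]
  simp_rw [← (hasSum_indicator_finsupp_prod_pow hx hx1 _).tsum_eq]
  refine tendsto_tsum_of_dominated_convergence hs (fun n ↦ ?_) (.of_forall fun T n ↦ ?_)
  · refine tendsto_const_nhds.congr' ?_
    filter_upwards [eventually_ge_atTop n.support] with T hT
    rw [Set.indicator_of_mem (by exact hT)]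
  · have : 0 ≤ n.prod fun i k ↦ x i ^ k := Finset.prod_nonneg fun i _ ↦ pow_nonneg (hx i) _
    refine (norm_indicator_le_norm_self _ _).trans ?_
    rw [Real.norm_of_nonneg this]

end EulerProduct

section IdealSums

variable {E : Type*} [Field E] [NumberField E]

instance (n : ℕ) : Finite {I : {I : Ideal (𝓞 E) // I ≠ 0} // Ideal.absNorm I.1 = n} :=
  have : Finite {I : Ideal (𝓞 E) // Ideal.absNorm I = n} := Ideal.finite_setOfPred_absNorm_eq n
  Finite.of_injective (fun I ↦ (⟨I.1.1, I.2⟩ : {I : Ideal (𝓞 E) // Ideal.absNorm I = n}))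
    fun I J h ↦ by simpa [Subtype.ext_iff] using h

theorem absNorm_ne_zero_of_ne_zero (I : {I : Ideal (𝓞 E) // I ≠ 0}) : Ideal.absNorm I.1 ≠ 0 :=
  fun h ↦ I.2 (Ideal.absNorm_eq_zero_iff.mp h)

theorem natCard_ne_zero_ideal_absNorm_eq {n : ℕ} (hn : n ≠ 0) :
    Nat.card {I : {I : Ideal (𝓞 E) // I ≠ 0} // Ideal.absNorm I.1 = n} =
      Nat.card {I : Ideal (𝓞 E) // Ideal.absNorm I = n} :=
  Nat.card_congr
    { toFun I := ⟨I.1.1, I.2⟩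
      invFun I := ⟨⟨I.1, fun h ↦ hn (by rw [← I.2, h, Ideal.zero_eq_bot, Ideal.absNorm_bot])⟩, I.2⟩
      left_inv _ := rfl
      right_inv _ := rfl }

variable (E) in
theorem tendsto_sum_natCard_ideal_div :
    Tendsto (fun n : ℕ ↦ (∑ k ∈ Finset.Icc 1 n,
      (Nat.card {I : Ideal (𝓞 E) // Ideal.absNorm I = k} : ℝ)) / n) atTop
      (𝓝 (NumberField.dedekindZeta_residue E)) := by
  refine ((NumberField.Ideal.tendsto_norm_le_div_atTop₀ E).comp tendsto_natCast_atTop_atTop).congr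
    fun n ↦ ?_
  simp only [Function.comp_apply, Nat.cast_le, ← Nat.cast_sum]
  congr
  rw [← add_left_inj 1, ← Ideal.card_norm_le_eq_card_norm_le_add_one,
    show Finset.Icc 1 n = Finset.Ioc 0 n from Finset.Icc_succ_left_eq_Ioc _ _,
    show 1 = Nat.card {I : Ideal (𝓞 E) // Ideal.absNorm I = 0} by simp [Ideal.absNorm_eq_zero_iff],
    Finset.sum_Ioc_add_eq_sum_Icc (n.zero_le),
    ← Finset.card_preimage_eq_sum_card_image_eq (fun k _ ↦ Ideal.finite_setOfPred_absNorm_eq k)]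
  simp [Set.coe_eq_subtype]

theorem summable_absNorm_rpow {s : ℝ} (hs : 1 < s) :
    Summable fun I : {I : Ideal (𝓞 E) // I ≠ 0} ↦ (Ideal.absNorm I.1 : ℝ) ^ (-s) := by
  rw [← LSeriesSummable_natCard_fiber_iff absNorm_ne_zero_of_ne_zero]
  have hO : (fun n : ℕ ↦ ∑ k ∈ Finset.Icc 1 n,
      (Nat.card {I : Ideal (𝓞 E) // Ideal.absNorm I = k} : ℝ)) =O[atTop]
      fun n ↦ (n : ℝ) ^ (1 : ℝ) := by
    simp_rw [Real.rpow_one]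
    refine Asymptotics.isBigO_of_div_tendsto_nhds ?_ _ (tendsto_sum_natCard_ideal_div E)
    filter_upwards [eventually_ne_atTop 0] with n hn h
    exact absurd (Nat.cast_eq_zero.mp h) hn
  have := LSeriesSummable_of_sum_norm_bigO_and_nonneg (s := s) hO (fun n ↦ Nat.cast_nonneg _)
    zero_le_one (by simpa using hs)
  refine (LSeriesSummable_congr s fun {n} hn ↦ ?_).mpr this
  rw [natCard_ne_zero_ideal_absNorm_eq hn, Complex.ofReal_natCast]

theorem tendsto_sub_one_mul_tsum_absNorm_rpow :
    Tendsto (fun s : ℝ ↦ (s - 1) * ∑' I : {I : Ideal (𝓞 E) // I ≠ 0},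
      (Ideal.absNorm I.1 : ℝ) ^ (-s)) (𝓝[>] 1) (𝓝 (NumberField.dedekindZeta_residue E)) := by
  rw [← Filter.tendsto_ofReal_iff]
  refine (NumberField.tendsto_sub_one_mul_dedekindZeta_nhdsGT E).congr' ?_
  filter_upwards [self_mem_nhdsWithin] with s hs
  push_cast
  rw [← Complex.ofReal_tsum, ← LSeries_natCard_fiber absNorm_ne_zero_of_ne_zero
    (summable_absNorm_rpow hs), NumberField.dedekindZeta]
  congr 1
  exact LSeries_congr (fun {n} hn ↦ by rw [natCard_ne_zero_ideal_absNorm_eq hn]) _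

/-- Unique factorization: a nonzero ideal is given by its exponent vector. -/
theorem bijective_finsupp_prod_pow :
    Function.Bijective fun n : HeightOneSpectrum (𝓞 E) →₀ ℕ ↦
      (⟨n.prod fun P k ↦ P.asIdeal ^ k, Finset.prod_ne_zero_iff.mpr fun P _ ↦
        pow_ne_zero _ P.ne_bot⟩ : {I : Ideal (𝓞 E) // I ≠ 0}) := by
  classical
  have hprod (n : HeightOneSpectrum (𝓞 E) →₀ ℕ) : n.prod (fun P k ↦ P.asIdeal ^ k) =
      ((Finsupp.toMultiset n).map HeightOneSpectrum.asIdeal).prod := by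
    rw [Finsupp.toMultiset_map, Finsupp.prod_toMultiset, Finsupp.prod_mapDomain_index] <;>
      simp [pow_add]
  constructor
  · intro m n h
    have h' := Subtype.ext_iff.mp h
    simp only [hprod] at h'
    replace h' := congrArg UniqueFactorizationMonoid.normalizedFactors h'
    rw [UniqueFactorizationMonoid.normalizedFactors_prod_of_prime,
      UniqueFactorizationMonoid.normalizedFactors_prod_of_prime] at h'
    · exact Multiset.toFinsupp.symm.injective (Multiset.map_injective
        (fun P Q h ↦ HeightOneSpectrum.ext h) h')
    all_goals
      simp only [Multiset.mem_map]
      rintro _ ⟨P, -, rfl⟩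
      exact P.prime
  · rintro ⟨I, hI⟩
    suffices ∃ n : HeightOneSpectrum (𝓞 E) →₀ ℕ, (n.prod fun P k ↦ P.asIdeal ^ k) = I from
      this.imp fun n hn ↦ Subtype.ext hn
    induction I using UniqueFactorizationMonoid.induction_on_prime with
    | h₁ => exact absurd rfl hI
    | h₂ I h => exact ⟨0, by rw [Finsupp.prod_zero_index, isUnit_iff_eq_one.mp h]⟩
    | h₃ I P hI' hP ih =>
      obtain ⟨n, rfl⟩ := ih hI'
      refine ⟨Finsupp.single ⟨P, Ideal.isPrime_of_prime hP, hP.ne_zero⟩ 1 + n, ?_⟩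
      rw [Finsupp.prod_add_index'] <;> simp [pow_add]

variable (E) in
/-- The Euler product of the Dedekind zeta function. -/
theorem hasProd_absNorm_rpow {s : ℝ} (hs : 1 < s) :
    HasProd (fun P : HeightOneSpectrum (𝓞 E) ↦ (1 - (Ideal.absNorm P.asIdeal : ℝ) ^ (-s))⁻¹)
      (∑' I : {I : Ideal (𝓞 E) // I ≠ 0}, (Ideal.absNorm I.1 : ℝ) ^ (-s)) := by
  let e := Equiv.ofBijective _ (bijective_finsupp_prod_pow (E := E))
  have he (n : HeightOneSpectrum (𝓞 E) →₀ ℕ) : (Ideal.absNorm (e n).1 : ℝ) ^ (-s) =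
      n.prod fun P k ↦ ((Ideal.absNorm P.asIdeal : ℝ) ^ (-s)) ^ k := by
    simp only [e, Equiv.ofBijective_apply, Finsupp.prod, map_prod, map_pow, Nat.cast_prod,
      Nat.cast_pow]
    rw [← Real.finsetProd_rpow _ _ fun i _ ↦ by positivity]
    refine Finset.prod_congr rfl fun P _ ↦ ?_
    rw [← Real.rpow_natCast_mul, mul_comm, Real.rpow_mul_natCast] <;> positivity
  rw [← e.tsum_eq, tsum_congr he]
  refine hasProd_inv_one_sub (fun P ↦ by positivity) (fun P ↦ ?_) ?_
  · refine Real.rpow_lt_one_of_one_lt_of_neg ?_ (by linarith)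
    exact_mod_cast NumberField.HeightOneSpectrum.one_lt_absNorm P
  · simpa only [← he, Function.comp_def] using e.summable_iff.mpr (summable_absNorm_rpow hs)

end IdealSums

section LogZeta

variable {E : Type*} [Field E] [NumberField E]

theorem isPrimePow_absNorm (P : HeightOneSpectrum (𝓞 E)) :
    IsPrimePow (Ideal.absNorm P.asIdeal) := by
  let := Ideal.Quotient.field P.asIdeal
  have : Finite (𝓞 E ⧸ P.asIdeal) := P.asIdeal.finiteQuotientOfFreeOfNeBot P.ne_bot
  cases nonempty_fintype (𝓞 E ⧸ P.asIdeal)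
  have := FiniteField.isPrimePow_card (𝓞 E ⧸ P.asIdeal)
  rwa [← Nat.card_eq_fintype_card, natCard_quotient_eq_absNorm] at this

theorem two_le_absNorm (P : HeightOneSpectrum (𝓞 E)) : 2 ≤ Ideal.absNorm P.asIdeal :=
  NumberField.HeightOneSpectrum.one_lt_absNorm P

theorem prod_asIdeal_dvd {I : Ideal (𝓞 E)} (T : Finset (HeightOneSpectrum (𝓞 E)))
    (h : ∀ P ∈ T, P.asIdeal ∣ I) : ∏ P ∈ T, P.asIdeal ∣ I := by
  refine Finset.prod_dvd_of_coprime (fun P _ Q _ hPQ ↦ ?_) h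
  exact Ideal.isCoprime_of_isMaximal fun h ↦ hPQ (HeightOneSpectrum.ext h)

theorem absNorm_dvd_pow_finrank {p : ℕ} {P : HeightOneSpectrum (𝓞 E)} (h : (p : 𝓞 E) ∈ P.asIdeal) :
    Ideal.absNorm P.asIdeal ∣ p ^ Module.finrank ℚ E := by
  have := Ideal.absNorm_dvd_absNorm_of_le ((Ideal.span_singleton_le_iff_mem _).mpr h)
  rwa [Ideal.absNorm_span_natCast, NumberField.RingOfIntegers.rank] at this

theorem finite_natCast_mem {p : ℕ} (hp : p.Prime) :
    {P : HeightOneSpectrum (𝓞 E) | (p : 𝓞 E) ∈ P.asIdeal}.Finite :=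
  Set.Finite.subset (Ring.HasFiniteQuotients.finite_absNorm_heightOneSpectrum_le
    (p ^ Module.finrank ℚ E)) fun _ h ↦ Nat.le_of_dvd (pow_pos hp.pos _) (absNorm_dvd_pow_finrank h)

variable (E) in
theorem ncard_natCast_mem_le {p : ℕ} (hp : p.Prime) :
    {P : HeightOneSpectrum (𝓞 E) | (p : 𝓞 E) ∈ P.asIdeal}.ncard ≤ Module.finrank ℚ E := by
  set T := (finite_natCast_mem (E := E) hp).toFinset with hT
  rw [Set.ncard_eq_toFinset_card _ (finite_natCast_mem hp), ← hT]
  have hmem : ∀ P ∈ T, (p : 𝓞 E) ∈ P.asIdeal := fun P hP ↦ by simpa [hT] using hP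
  have hdvd : ∏ P ∈ T, P.asIdeal ∣ Ideal.span {(p : 𝓞 E)} := prod_asIdeal_dvd T fun P hP ↦
    Ideal.dvd_span_singleton.mpr (hmem P hP)
  have hle := Nat.le_of_dvd (by
    rw [Ideal.absNorm_span_natCast]; exact pow_pos hp.pos _) (map_dvd Ideal.absNorm hdvd)
  rw [Ideal.absNorm_span_natCast, NumberField.RingOfIntegers.rank, map_prod] at hle
  refine (Nat.pow_le_pow_iff_right hp.one_lt).mp (le_trans ?_ hle)
  refine Finset.pow_card_le_prod _ _ _ fun P hP ↦ ?_
  obtain ⟨k, -, hk⟩ := (Nat.dvd_prime_pow hp).mp (absNorm_dvd_pow_finrank (hmem P hP))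
  rw [hk]
  refine Nat.le_self_pow ?_ p
  rintro rfl
  have := two_le_absNorm P
  rw [hk] at this
  norm_num at this

theorem natCast_minFac_absNorm_mem (P : HeightOneSpectrum (𝓞 E)) :
    ((Ideal.absNorm P.asIdeal).minFac : 𝓞 E) ∈ P.asIdeal := by
  have h := Ideal.absNorm_mem P.asIdeal
  obtain ⟨p, k, hp, hk, hpk⟩ := (isPrimePow_nat_iff _).mp (isPrimePow_absNorm P)
  rw [← hpk] at h ⊢
  rw [hp.pow_minFac hk.ne']
  rw [Nat.cast_pow] at h
  exact P.isPrime.mem_of_pow_mem _ h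

variable (E) in
/-- The primes which are not of degree one over a rational prime not dividing `D` contribute a
convergent series at `s = 1`. -/
theorem summable_inv_absNorm_of_not_prime {D : ℕ} (hD : D ≠ 0) :
    Summable fun P : {P : HeightOneSpectrum (𝓞 E) // ¬ ((Ideal.absNorm P.asIdeal).Prime ∧
      ¬ Ideal.absNorm P.asIdeal ∣ D)} ↦ (Ideal.absNorm P.1.asIdeal : ℝ)⁻¹ := by
  let B := {P : HeightOneSpectrum (𝓞 E) // ¬ ((Ideal.absNorm P.asIdeal).Prime ∧
    ¬ Ideal.absNorm P.asIdeal ∣ D)}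
  let w (P : B) : ℕ := (Ideal.absNorm P.1.asIdeal).minFac
  have hprime (P : B) : (w P).Prime := Nat.minFac_prime (by have := two_le_absNorm P.1; lia)
  have hinj (n : ℕ) : Function.Injective fun P : {P // w P = n} ↦
      (⟨P.1.1, congrArg (Nat.cast (R := 𝓞 E)) P.2 ▸ natCast_minFac_absNorm_mem P.1.1⟩ :
        {P : HeightOneSpectrum (𝓞 E) | (n : 𝓞 E) ∈ P.asIdeal}) :=
    fun P Q h ↦ Subtype.ext (Subtype.ext (by simpa using h))
  have hempty {n : ℕ} (hn : ¬ n.Prime) : IsEmpty {P // w P = n} :=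
    ⟨fun P ↦ hn (P.2 ▸ hprime P.1)⟩
  have hfin (n : ℕ) : Finite {P // w P = n} := by
    by_cases hn : n.Prime
    · have := (finite_natCast_mem (E := E) hn).to_subtype
      exact Finite.of_injective _ (hinj n)
    · have := hempty hn
      infer_instance
  have hcard (n : ℕ) : Nat.card {P // w P = n} ≤ Module.finrank ℚ E := by
    by_cases hn : n.Prime
    · have := (finite_natCast_mem (E := E) hn).to_subtype
      exact (Nat.card_le_card_of_injective _ (hinj n)).trans (ncard_natCast_mem_le E hn)
    · have := hempty hn
      simp
  have hsum : Summable fun P : B ↦ (w P : ℝ) ^ (-2 : ℝ) := by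
    rw [summable_rpow_iff_summable_card_mul]
    refine Summable.of_nonneg_of_le (fun n ↦ by positivity) (fun n ↦ ?_)
      ((Real.summable_nat_rpow.mpr (by norm_num : (-2 : ℝ) < -1)).mul_left
        (Module.finrank ℚ E : ℝ))
    gcongr
    exact hcard n
  refine Summable.of_nonneg_of_le (fun P ↦ by positivity) (fun P ↦ ?_) (hsum.mul_left (D : ℝ))
  have hle : w P ^ 2 ≤ D * Ideal.absNorm P.1.asIdeal := by
    obtain ⟨p, k, hp, hk, hpk⟩ := (isPrimePow_nat_iff _).mp (isPrimePow_absNorm P.1)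
    have hP := P.2
    have hwP : w P = p := by
      change (Ideal.absNorm P.1.asIdeal).minFac = p
      rw [← hpk, hp.pow_minFac hk.ne']
    rw [hwP, ← hpk]
    rcases (Nat.succ_le_of_lt hk).eq_or_lt with rfl | hk2
    · simp only [← hpk, Nat.succ_eq_add_one, zero_add, pow_one, hp, true_and, not_not] at hP
      have := Nat.le_of_dvd (Nat.pos_of_ne_zero hD) hP
      simpa [sq] using Nat.mul_le_mul_right p this
    · exact (Nat.pow_le_pow_right hp.pos hk2).trans
        (Nat.le_mul_of_pos_left _ (Nat.pos_of_ne_zero hD))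
  have hle' : (w P : ℝ) ^ 2 ≤ D * Ideal.absNorm P.1.asIdeal := by exact_mod_cast hle
  have h1 : (0 : ℝ) < w P := by exact_mod_cast (hprime P).pos
  have h2 : (0 : ℝ) < Ideal.absNorm P.1.asIdeal := by
    have := two_le_absNorm P.1
    positivity
  rw [Real.rpow_neg h1.le, Real.rpow_two, inv_le_iff_one_le_mul₀ h2, mul_comm, ← mul_assoc,
    ← div_eq_mul_inv, one_le_div (by positivity), mul_comm]
  exact hle'

variable (E) in
theorem hasSum_neg_log_one_sub_absNorm_rpow {s : ℝ} (hs : 1 < s) :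
    HasSum (fun P : HeightOneSpectrum (𝓞 E) ↦ -Real.log (1 - (Ideal.absNorm P.asIdeal : ℝ) ^ (-s)))
      (Real.log (∑' I : {I : Ideal (𝓞 E) // I ≠ 0}, (Ideal.absNorm I.1 : ℝ) ^ (-s))) := by
  have hpos : 0 < ∑' I : {I : Ideal (𝓞 E) // I ≠ 0}, (Ideal.absNorm I.1 : ℝ) ^ (-s) :=
    (summable_absNorm_rpow hs).tsum_pos (fun I ↦ by positivity) ⟨⊤, top_ne_bot⟩ (by simp)
  have h := (hasProd_absNorm_rpow E hs)
  rw [HasProd] at h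
  refine (h.log hpos.ne').congr fun T ↦ ?_
  rw [Real.log_prod]
  · simp
  · intro P _
    refine inv_ne_zero (sub_pos.mpr (Real.rpow_lt_one_of_one_lt_of_neg ?_ (by linarith))).ne'
    exact_mod_cast NumberField.HeightOneSpectrum.one_lt_absNorm P

theorem neg_log_one_sub_le {x : ℝ} (h : x ≤ 1 / 2) :
    -Real.log (1 - x) ≤ x + 2 * x ^ 2 := by
  have h1 : 0 < 1 - x := by linarith
  have := Real.one_sub_inv_le_log_of_pos h1
  have h3 : (1 - x)⁻¹ ≤ 1 + x + 2 * x ^ 2 := by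
    rw [inv_le_iff_one_le_mul₀ h1]
    nlinarith [mul_nonneg (sq_nonneg x) (by linarith : 0 ≤ 1 - 2 * x)]
  linarith

theorem le_neg_log_one_sub {x : ℝ} (h : x < 1) : x ≤ -Real.log (1 - x) := by
  have := Real.log_le_sub_one_of_pos (sub_pos.mpr h)
  linarith

variable (E) in
/-- Up to a bounded error, the logarithm of the Dedekind zeta function is the sum over the primes
of degree one. -/
theorem exists_log_tsum_sub_tsum_mem_Icc {D : ℕ} (hD : D ≠ 0) :
    ∃ C : ℝ, ∀ s : ℝ, 1 < s →
      Real.log (∑' I : {I : Ideal (𝓞 E) // I ≠ 0}, (Ideal.absNorm I.1 : ℝ) ^ (-s)) -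
        ∑' P : HeightOneSpectrum (𝓞 E), (if (Ideal.absNorm P.asIdeal).Prime ∧
          ¬ Ideal.absNorm P.asIdeal ∣ D then (Ideal.absNorm P.asIdeal : ℝ) ^ (-s) else 0)
        ∈ Set.Icc 0 C := by
  let S : Set (HeightOneSpectrum (𝓞 E)) :=
    {P | (Ideal.absNorm P.asIdeal).Prime ∧ ¬ Ideal.absNorm P.asIdeal ∣ D}
  have hsumm {s : ℝ} (hs : 1 < s) :
      Summable fun P : HeightOneSpectrum (𝓞 E) ↦ (Ideal.absNorm P.asIdeal : ℝ) ^ (-s) :=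
    (summable_absNorm_rpow hs).comp_injective
      (i := fun P : HeightOneSpectrum (𝓞 E) ↦ (⟨P.asIdeal, P.ne_bot⟩ : {I : Ideal (𝓞 E) // I ≠ 0}))
      fun P Q h ↦ HeightOneSpectrum.ext (Subtype.ext_iff.mp h)
  have hB : Summable fun P : HeightOneSpectrum (𝓞 E) ↦
      2 * (Ideal.absNorm P.asIdeal : ℝ) ^ (-2 : ℝ) +
        Sᶜ.indicator (fun P ↦ (Ideal.absNorm P.asIdeal : ℝ)⁻¹) P :=
    ((hsumm one_lt_two).mul_left 2).add
      (summable_subtype_iff_indicator.mp (summable_inv_absNorm_of_not_prime E hD))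
  refine ⟨∑' P : HeightOneSpectrum (𝓞 E), (2 * (Ideal.absNorm P.asIdeal : ℝ) ^ (-2 : ℝ) +
    Sᶜ.indicator (fun P ↦ (Ideal.absNorm P.asIdeal : ℝ)⁻¹) P), fun s hs ↦ ?_⟩
  have hlog := hasSum_neg_log_one_sub_absNorm_rpow E hs
  have hind : Summable fun P : HeightOneSpectrum (𝓞 E) ↦ (if (Ideal.absNorm P.asIdeal).Prime ∧
      ¬ Ideal.absNorm P.asIdeal ∣ D then (Ideal.absNorm P.asIdeal : ℝ) ^ (-s) else 0) :=
    Summable.of_nonneg_of_le (fun P ↦ by split_ifs <;> positivity)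
      (fun P ↦ by split_ifs <;> first | exact le_rfl | positivity) (hsumm hs)
  have hbd (P : HeightOneSpectrum (𝓞 E)) : (Ideal.absNorm P.asIdeal : ℝ) ^ (-s) ≤
      (Ideal.absNorm P.asIdeal : ℝ)⁻¹ ∧ (Ideal.absNorm P.asIdeal : ℝ)⁻¹ ≤ 1 / 2 := by
    have : (2 : ℝ) ≤ Ideal.absNorm P.asIdeal := by exact_mod_cast two_le_absNorm P
    refine ⟨?_, by rw [one_div]; gcongr⟩
    rw [← Real.rpow_neg_one]
    exact Real.rpow_le_rpow_of_exponent_le (by linarith) (by linarith)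
  rw [← hlog.tsum_eq, ← hlog.summable.tsum_sub hind]
  refine ⟨tsum_nonneg fun P ↦ ?_, (hlog.summable.sub hind).tsum_le_tsum (fun P ↦ ?_) hB⟩
  · have := le_neg_log_one_sub (((hbd P).1.trans (hbd P).2).trans_lt (by norm_num))
    have h0 : 0 ≤ (Ideal.absNorm P.asIdeal : ℝ) ^ (-s) := by positivity
    split_ifs <;> linarith
  · have h0 : 0 ≤ (Ideal.absNorm P.asIdeal : ℝ) ^ (-s) := by positivity
    have h1 := neg_log_one_sub_le ((hbd P).1.trans (hbd P).2)
    have h2 : ((Ideal.absNorm P.asIdeal : ℝ) ^ (-s)) ^ 2 ≤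
        (Ideal.absNorm P.asIdeal : ℝ) ^ (-2 : ℝ) := by
      rw [Real.rpow_neg (Nat.cast_nonneg _) 2, Real.rpow_two, ← inv_pow]
      exact pow_le_pow_left₀ h0 (hbd P).1 2
    by_cases hP : P ∈ S
    · rw [Set.indicator_of_notMem (by simpa using hP), if_pos (by exact hP)]
      linarith
    · rw [Set.indicator_of_mem (by exact hP), if_neg (by exact hP)]
      linarith [(hbd P).1]

end LogZeta

section Density

variable {E : Type*} [Field E] [NumberField E]

theorem tsum_ite_absNorm_rpow (c : ℕ → Prop) [DecidablePred c] {s : ℝ} (hs : 1 < s) :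
    ∑' P : HeightOneSpectrum (𝓞 E),
      (if c (Ideal.absNorm P.asIdeal) then (Ideal.absNorm P.asIdeal : ℝ) ^ (-s) else 0) =
    ∑' n : ℕ, if c n then (primeCount E n : ℝ) * (n : ℝ) ^ (-s) else 0 := by
  let S : Set (HeightOneSpectrum (𝓞 E)) := {P | c (Ideal.absNorm P.asIdeal)}
  let w : S → ℕ := fun P ↦ Ideal.absNorm P.1.asIdeal
  have hinj (n : ℕ) : Function.Injective fun P : {P : S // w P = n} ↦
      (⟨P.1.1, P.2⟩ : {P : HeightOneSpectrum (𝓞 E) // Ideal.absNorm P.asIdeal = n}) :=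
    fun P Q h ↦ Subtype.ext (Subtype.ext (Subtype.mk.inj h))
  have (n : ℕ) : Finite {P : S // w P = n} := Finite.of_injective _ (hinj n)
  have hsumm : Summable fun P : S ↦ (w P : ℝ) ^ (-s) :=
    (summable_absNorm_rpow hs).comp_injective
      (i := fun P : S ↦ (⟨P.1.asIdeal, P.1.ne_bot⟩ : {I : Ideal (𝓞 E) // I ≠ 0}))
      fun P Q h ↦ Subtype.ext (HeightOneSpectrum.ext (Subtype.ext_iff.mp h))
  have h := tsum_rpow_eq_tsum_card_mul w hsumm
  have hS := tsum_subtype S fun P ↦ (Ideal.absNorm P.asIdeal : ℝ) ^ (-s)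
  calc _ = ∑' P, S.indicator (fun P ↦ (Ideal.absNorm P.asIdeal : ℝ) ^ (-s)) P :=
        tsum_congr fun P ↦ by by_cases hP : c (Ideal.absNorm P.asIdeal) <;> simp [S, hP]
    _ = _ := hS.symm.trans h
    _ = _ := tsum_congr fun n ↦ ?_
  split_ifs with hn
  · congr 2
    refine Nat.card_congr (Equiv.ofBijective _ ⟨hinj n, fun P ↦ ?_⟩)
    exact ⟨⟨⟨P.1, by simpa only [S, Set.mem_ofPred_eq, P.2] using hn⟩, P.2⟩, rfl⟩
  · have : IsEmpty {P : S // w P = n} := ⟨fun P ↦ hn (P.2 ▸ P.1.2)⟩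
    simp

theorem tendsto_neg_log_sub_one : Tendsto (fun s : ℝ ↦ -Real.log (s - 1)) (𝓝[>] 1) atTop := by
  refine tendsto_neg_atBot_atTop.comp (Real.tendsto_log_nhdsGT_zero.comp ?_)
  refine tendsto_nhdsWithin_iff.mpr ⟨?_, ?_⟩
  · have : Tendsto (fun s : ℝ ↦ s - 1) (𝓝 1) (𝓝 (1 - 1)) := (continuous_sub_right 1).tendsto 1
    rw [sub_self] at this
    exact this.mono_left nhdsWithin_le_nhds
  · filter_upwards [self_mem_nhdsWithin] with s hs using sub_pos.mpr (Set.mem_Ioi.mp hs)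

variable (E) in
/-- Rational primes weighted by the number of primes of degree one above them have Dirichlet
density one. -/
theorem tendsto_tsum_primeCount_div_neg_log {D : ℕ} (hD : D ≠ 0) :
    Tendsto (fun s : ℝ ↦ (∑' n : ℕ, if n.Prime ∧ ¬ n ∣ D then
      (primeCount E n : ℝ) * (n : ℝ) ^ (-s) else 0) / -Real.log (s - 1)) (𝓝[>] 1) (𝓝 1) := by
  obtain ⟨C, hC⟩ := exists_log_tsum_sub_tsum_mem_Icc E hD
  set Z : ℝ → ℝ := fun s ↦ ∑' I : {I : Ideal (𝓞 E) // I ≠ 0}, (Ideal.absNorm I.1 : ℝ) ^ (-s)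
  set A : ℝ → ℝ := fun s ↦ ∑' n : ℕ, if n.Prime ∧ ¬ n ∣ D then
      (primeCount E n : ℝ) * (n : ℝ) ^ (-s) else 0
  have hρ := NumberField.dedekindZeta_residue_pos E
  have hlim : Tendsto (fun s ↦ (s - 1) * Z s) (𝓝[>] 1) (𝓝 (NumberField.dedekindZeta_residue E)) :=
    tendsto_sub_one_mul_tsum_absNorm_rpow
  have h1 : Tendsto (fun s ↦ Real.log ((s - 1) * Z s) / -Real.log (s - 1)) (𝓝[>] 1) (𝓝 0) :=
    (hlim.log hρ.ne').div_atTop tendsto_neg_log_sub_one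
  have h2 : Tendsto (fun s ↦ (Real.log (Z s) - A s) / -Real.log (s - 1)) (𝓝[>] 1) (𝓝 0) := by
    refine squeeze_zero' ?_ ?_
      (tendsto_const_nhds (x := C) |>.div_atTop tendsto_neg_log_sub_one)
    all_goals
      filter_upwards [self_mem_nhdsWithin, tendsto_neg_log_sub_one.eventually_gt_atTop 0]
        with s hs hpos
      have := hC s hs
      rw [tsum_ite_absNorm_rpow (fun n ↦ n.Prime ∧ ¬ n ∣ D) hs] at this
    · exact div_nonneg this.1 hpos.le
    · exact div_le_div_of_nonneg_right this.2 hpos.le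
  have h3 := (h1.sub h2).const_add 1
  rw [sub_zero, add_zero] at h3
  refine h3.congr' ?_
  filter_upwards [self_mem_nhdsWithin, tendsto_neg_log_sub_one.eventually_gt_atTop 0,
    hlim.eventually_const_lt hρ] with s hs hpos hZ
  have hs' : 0 < s - 1 := sub_pos.mpr hs
  have hZ' : 0 < Z s := pos_of_mul_pos_right hZ hs'.le
  rw [Real.log_mul hs'.ne' hZ'.ne']
  have hA : (∑' n : ℕ, if n.Prime ∧ ¬ n ∣ D then
      (primeCount E n : ℝ) * (n : ℝ) ^ (-s) else 0) = A s := rfl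
  rw [hA]
  have := neg_ne_zero.mp hpos.ne'
  field_simp
  ring

/-- The Dirichlet average of `f ∘ τ` over the natural numbers satisfying `c` is the average of
the function `f` over `G`. -/
def HasDirichletAverage {G : Type*} [Fintype G] (c : ℕ → Prop) (τ : ℕ → G) (f : G → ℝ) : Prop :=
  Tendsto (fun s : ℝ ↦ (∑' n : ℕ, {n | c n}.indicator (fun n ↦ f (τ n) * (n : ℝ) ^ (-s)) n) /
    -Real.log (s - 1)) (𝓝[>] 1) (𝓝 ((∑ g, f g) / Fintype.card G))

section Average

variable {G : Type*} [Fintype G] {c : ℕ → Prop} {τ : ℕ → G}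

theorem summable_indicator_mul_rpow (c : ℕ → Prop) (τ : ℕ → G) (f : G → ℝ) {s : ℝ} (hs : 1 < s) :
    Summable ({n | c n}.indicator fun n : ℕ ↦ f (τ n) * (n : ℝ) ^ (-s)) := by
  refine Summable.indicator ?_ _
  refine Summable.of_norm_bounded (g := fun n : ℕ ↦ (∑ g, |f g|) * (n : ℝ) ^ (-s))
    ((Real.summable_nat_rpow.mpr (by linarith)).mul_left _) fun n ↦ ?_
  rw [norm_mul, Real.norm_eq_abs, Real.norm_of_nonneg (by positivity : 0 ≤ (n : ℝ) ^ (-s))]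
  gcongr
  exact Finset.single_le_sum (f := fun g ↦ |f g|) (fun g _ ↦ abs_nonneg _) (Finset.mem_univ (τ n))

theorem HasDirichletAverage.sum {ι : Type*} (T : Finset ι) {f : ι → G → ℝ}
    (h : ∀ i ∈ T, HasDirichletAverage c τ (f i)) :
    HasDirichletAverage c τ fun g ↦ ∑ i ∈ T, f i g := by
  have := tendsto_finsetSum T h
  rw [← Finset.sum_div, Finset.sum_comm] at this
  refine this.congr' ?_
  filter_upwards [self_mem_nhdsWithin] with s hs
  rw [← Finset.sum_div,
    ← Summable.tsum_finsetSum fun i _ ↦ summable_indicator_mul_rpow c τ (f i) hs]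
  congr 1
  refine tsum_congr fun n ↦ ?_
  by_cases hn : c n <;> simp [hn, Finset.sum_mul]

theorem HasDirichletAverage.const_mul (a : ℝ) {f : G → ℝ} (h : HasDirichletAverage c τ f) :
    HasDirichletAverage c τ fun g ↦ a * f g := by
  have := Tendsto.const_mul a h
  rw [HasDirichletAverage, ← Finset.mul_sum, mul_div_assoc]
  refine this.congr fun s ↦ ?_
  rw [← mul_div_assoc, ← tsum_mul_left]
  congr 1
  refine tsum_congr fun n ↦ ?_
  by_cases hn : c n <;> simp [hn, mul_assoc]

theorem HasDirichletAverage.add {f g : G → ℝ} (hf : HasDirichletAverage c τ f)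
    (hg : HasDirichletAverage c τ g) : HasDirichletAverage c τ fun x ↦ f x + g x := by
  have := HasDirichletAverage.sum (c := c) (τ := τ) (f := fun b : Bool ↦ if b then f else g)
    Finset.univ (by simp [hf, hg])
  simpa using this

/-- A function of the form `f²` whose Dirichlet average is its average vanishes as soon as it
vanishes along `τ`. -/
theorem HasDirichletAverage.eq_zero [Nonempty G] {f : G → ℝ}
    (h : HasDirichletAverage c τ fun g ↦ f g ^ 2) (h0 : ∀ n, c n → f (τ n) = 0) (g : G) :
    f g = 0 := by
  have hz : (fun s : ℝ ↦ (∑' n : ℕ, {n | c n}.indicator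
      (fun n ↦ f (τ n) ^ 2 * (n : ℝ) ^ (-s)) n) / -Real.log (s - 1)) = fun _ ↦ 0 := by
    funext s
    have : (fun n : ℕ ↦ {n | c n}.indicator (fun n ↦ f (τ n) ^ 2 * (n : ℝ) ^ (-s)) n) = 0 := by
      funext n
      by_cases hn : c n <;> simp [hn, h0]
    rw [this, Pi.zero_def, tsum_zero, zero_div]
  rw [HasDirichletAverage, hz] at h
  have := tendsto_nhds_unique h tendsto_const_nhds
  rw [div_eq_zero_iff, or_iff_left (by simp), Finset.sum_eq_zero_iff_of_nonneg
    fun _ _ ↦ sq_nonneg _] at this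
  exact pow_eq_zero_iff two_ne_zero |>.mp (this g (Finset.mem_univ g))

end Average

variable {G : Type*} [Group G] [Fintype G] {c : ℕ → Prop} {τ : ℕ → G}

theorem HasDirichletAverage.conjCount_mul_conjCount
    (h : ∀ U : Subgroup G, HasDirichletAverage c τ (conjCount U)) (U V : Subgroup G) :
    HasDirichletAverage c τ fun g ↦ conjCount U g * conjCount V g := by
  have := (HasDirichletAverage.sum Finset.univ fun x _ ↦
    HasDirichletAverage.sum Finset.univ fun y _ ↦
      h (U.comap (MulAut.conj x).toMonoidHom ⊓ V.comap (MulAut.conj y).toMonoidHom)).const_mul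
        (Fintype.card G : ℝ)⁻¹
  simp only [← card_mul_conjCount_mul_conjCount] at this
  simpa [← mul_assoc] using this

/-- If the class functions `conjCount U` are equidistributed along `τ`, two of them that are
proportional along `τ` are proportional everywhere. -/
theorem mul_conjCount_eq_of_hasDirichletAverage
    (h : ∀ U : Subgroup G, HasDirichletAverage c τ (conjCount U)) {U V : Subgroup G} {a b : ℝ}
    (hUV : ∀ n, c n → a * conjCount U (τ n) = b * conjCount V (τ n)) (g : G) :
    a * conjCount U g = b * conjCount V g := by
  rw [← sub_eq_zero]
  refine HasDirichletAverage.eq_zero (c := c) (τ := τ)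
    (f := fun g ↦ a * conjCount U g - b * conjCount V g) ?_
    (fun n hn ↦ sub_eq_zero.mpr (hUV n hn)) g
  have hm := HasDirichletAverage.conjCount_mul_conjCount h
  have := (((hm U U).const_mul (a ^ 2)).add ((hm U V).const_mul (-(2 * a * b)))).add
    ((hm V V).const_mul (b ^ 2))
  convert this using 2
  ring

end Density

section Comparison

theorem exists_hasDirichletAverage_conjCount {N : Type*} [Field N] [NumberField N] [IsGalois ℚ N]
    {D : ℕ} (hD : D ≠ 0) (hfree : ∀ (p : ℕ) [Fact p.Prime], ¬ p ∣ D →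
      ∀ (z : 𝓞 N →+* AlgebraicClosure (ZMod p)) (g : N ≃ₐ[ℚ] N),
        (∀ b : 𝓞 N, z (g • b) = z b) → g = 1) :
    ∃ τ : ℕ → N ≃ₐ[ℚ] N, ∀ U : Subgroup (N ≃ₐ[ℚ] N),
      (∀ n : ℕ, n.Prime ∧ ¬ n ∣ D → conjCount U (τ n) =
        (Nat.card U : ℝ) * primeCount (IntermediateField.fixedField U) n) ∧
      HasDirichletAverage (fun n ↦ n.Prime ∧ ¬ n ∣ D) τ (conjCount U) := by
  have hex (n : ℕ) : ∃ t : N ≃ₐ[ℚ] N, n.Prime ∧ ¬ n ∣ D → ∀ U : Subgroup (N ≃ₐ[ℚ] N),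
      conjCount U t = (Nat.card U : ℝ) * primeCount (IntermediateField.fixedField U) n := by
    by_cases hn : n.Prime ∧ ¬ n ∣ D
    · have : Fact n.Prime := ⟨hn.1⟩
      obtain ⟨t, ht⟩ := exists_card_mul_finiteFieldPointCount_eq_conjCount n (hfree n hn.2)
      exact ⟨t, fun _ U ↦ by rw [← ht U, finiteFieldPointCount_one]⟩
    · exact ⟨1, fun h ↦ absurd h hn⟩
  choose τ hτ using hex
  refine ⟨τ, fun U ↦ ⟨fun n hn ↦ hτ n hn U, ?_⟩⟩
  have h := (tendsto_tsum_primeCount_div_neg_log (IntermediateField.fixedField U) hD).const_mul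
    (Nat.card U : ℝ)
  rw [HasDirichletAverage, sum_conjCount, mul_div_cancel_left₀ _ (by simp)]
  rw [mul_one] at h
  refine h.congr fun s ↦ ?_
  rw [← mul_div_assoc, ← tsum_mul_left]
  congr 1
  refine tsum_congr fun n ↦ ?_
  by_cases hn : n.Prime ∧ ¬ n ∣ D
  · rw [if_pos hn, Set.indicator_of_mem (by exact hn), hτ n hn U, mul_assoc]
  · rw [if_neg hn, Set.indicator_of_notMem (by exact hn), mul_zero]

theorem exists_isGalois_algHom (K L : Type*) [Field K] [NumberField K] [Field L] [NumberField L] :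
    ∃ (N : Type) (_ : Field N) (_ : NumberField N),
      IsGalois ℚ N ∧ Nonempty (K →ₐ[ℚ] N) ∧ Nonempty (L →ₐ[ℚ] N) := by
  let f : K →ₐ[ℚ] AlgebraicClosure ℚ := IsAlgClosed.lift
  let g : L →ₐ[ℚ] AlgebraicClosure ℚ := IsAlgClosed.lift
  have : FiniteDimensional ℚ f.fieldRange := f.toLinearMap.finiteDimensional_range
  have : FiniteDimensional ℚ g.fieldRange := g.toLinearMap.finiteDimensional_range
  let M := f.fieldRange ⊔ g.fieldRange
  have : FiniteDimensional ℚ M := IntermediateField.finiteDimensional_sup _ _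
  let N := IntermediateField.normalClosure ℚ M (AlgebraicClosure ℚ)
  have hMN : M ≤ N := IntermediateField.le_normalClosure M
  have : NumberField N := { }
  have : Algebra.IsAlgebraic ℚ (AlgebraicClosure ℚ) := by
    rw [Subsingleton.elim (DivisionRing.toRatAlgebra (R := AlgebraicClosure ℚ))
      (AlgebraicClosure.instAlgebra ℚ)]
    exact AlgebraicClosure.isAlgebraic ℚ
  have : IsAlgClosure ℚ (AlgebraicClosure ℚ) := ⟨inferInstance, this⟩
  have : Normal ℚ (AlgebraicClosure ℚ) := IsAlgClosure.normal ℚ _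
  have : Normal ℚ N := normalClosure.normal ℚ M (AlgebraicClosure ℚ)
  refine ⟨N, inferInstance, inferInstance, ⟨⟩, ⟨?_⟩, ⟨?_⟩⟩
  · exact (IntermediateField.inclusion (le_sup_left.trans hMN)).comp f.rangeRestrict
  · exact (IntermediateField.inclusion (le_sup_right.trans hMN)).comp g.rangeRestrict

theorem exists_ringEquiv_fixedField {K N : Type*} [Field K] [NumberField K] [Field N]
    [NumberField N] [IsGalois ℚ N] (f : K →ₐ[ℚ] N) :
    ∃ U : Subgroup (N ≃ₐ[ℚ] N), Nonempty (𝓞 K ≃+* 𝓞 (IntermediateField.fixedField U)) := by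
  refine ⟨f.fieldRange.fixingSubgroup, ⟨?_⟩⟩
  rw [IsGalois.fixedField_fixingSubgroup]
  exact NumberField.RingOfIntegers.mapRingEquiv (AlgEquiv.ofInjectiveField f).toRingEquiv

/-- Two number fields in which all but finitely many rational primes have the same number of
primes of degree one above them have the same number of primes of every norm. -/
theorem primeCount_eq_of_forall_not_dvd {K L : Type*} [Field K] [NumberField K] [Field L]
    [NumberField L] {D : ℕ} (hD : D ≠ 0)
    (h : ∀ p : ℕ, p.Prime → ¬ p ∣ D → primeCount K p = primeCount L p) (q : ℕ) :
    primeCount K q = primeCount L q := by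
  obtain ⟨N, _, _, _, ⟨f⟩, ⟨g⟩⟩ := exists_isGalois_algHom K L
  obtain ⟨U, ⟨eU⟩⟩ := exists_ringEquiv_fixedField f
  obtain ⟨V, ⟨eV⟩⟩ := exists_ringEquiv_fixedField g
  obtain ⟨D', hD', hfree⟩ := exists_forall_not_dvd_smul_free N
  obtain ⟨τ, hτ⟩ := exists_hasDirichletAverage_conjCount (mul_ne_zero hD hD')
    fun p _ hp ↦ hfree p fun hd ↦ hp (hd.mul_left D)
  have hpos (W : Subgroup (N ≃ₐ[ℚ] N)) : (Nat.card W : ℝ) ≠ 0 :=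
    Nat.cast_ne_zero.mpr Nat.card_pos.ne'
  have hcong {p : ℕ} (hp : p.Prime) :
      primeCount K p = primeCount (IntermediateField.fixedField U) p ∧
      primeCount L p = primeCount (IntermediateField.fixedField V) p := by
    have : Fact p.Prime := ⟨hp⟩
    simp only [← finiteFieldPointCount_one]
    exact ⟨finiteFieldPointCount_congr eU p 1, finiteFieldPointCount_congr eV p 1⟩
  have hprop := mul_conjCount_eq_of_hasDirichletAverage (fun W ↦ (hτ W).2) (U := U) (V := V)
    (a := (Nat.card U : ℝ)⁻¹) (b := (Nat.card V : ℝ)⁻¹) fun n hn ↦ by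
      rw [(hτ U).1 n hn, (hτ V).1 n hn, inv_mul_cancel_left₀ (hpos U),
        inv_mul_cancel_left₀ (hpos V), ← (hcong hn.1).1, ← (hcong hn.1).2,
        h n hn.1 fun hd ↦ hn.2 (hd.mul_right D')]
  refine primeCount_eq_of_finiteFieldPointCount_eq (fun p _ k ↦ ?_) q
  rw [finiteFieldPointCount_congr eU, finiteFieldPointCount_congr eV]
  have hcard : (Fintype.card (N ≃ₐ[ℚ] N) : ℝ) ≠ 0 := by simp
  rw [← Nat.cast_inj (R := ℝ), ← mul_right_inj' hcard]
  have hsum (W : Subgroup (N ≃ₐ[ℚ] N)) : (Fintype.card (N ≃ₐ[ℚ] N) : ℝ) *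
      finiteFieldPointCount (𝓞 (IntermediateField.fixedField W)) p k =
      ∑ g, (frobeniusSolutionCount p k g : ℝ) * ((Nat.card W : ℝ)⁻¹ * conjCount W g) := by
    simp_rw [mul_left_comm _ (Nat.card W : ℝ)⁻¹]
    rw [← Finset.mul_sum, ← card_mul_card_mul_finiteFieldPointCount p k W, mul_left_comm,
      inv_mul_cancel_left₀ (hpos W)]
  rw [hsum U, hsum V]
  simp_rw [hprop]

theorem tsum_absNorm_rpow_eq_of_primeCount_eq {K L : Type*} [Field K] [NumberField K] [Field L]
    [NumberField L] (h : ∀ q, primeCount K q = primeCount L q) {s : ℝ} (hs : 1 < s) :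
    (∑' I : {I : Ideal (𝓞 K) // I ≠ 0}, (Ideal.absNorm I.1 : ℝ) ^ (-s)) =
      ∑' J : {J : Ideal (𝓞 L) // J ≠ 0}, (Ideal.absNorm J.1 : ℝ) ^ (-s) := by
  obtain ⟨e, he⟩ := exists_equiv_absNorm_eq h
  refine (hasProd_absNorm_rpow K hs).unique ?_
  have := e.hasProd_iff.mpr (hasProd_absNorm_rpow L hs)
  simpa only [Function.comp_def, he] using this

theorem add_eq_top_of_absNorm_eq_prime {R : Type*} [CommRing R] [IsDedekindDomain R]
    [Module.Free ℤ R] {I 𝔪 : Ideal R} (hI : (Ideal.absNorm I).Prime)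
    (hdvd : ¬ Ideal.absNorm I ∣ Ideal.absNorm 𝔪) : I + 𝔪 = ⊤ := by
  have hprime := Ideal.isPrime_of_irreducible_absNorm hI
  have hmax := hprime.isMaximal (fun h ↦ by simp [h, Nat.not_prime_zero] at hI)
  by_contra hne
  have hle : I + 𝔪 = I := (hmax.eq_of_le hne le_sup_left).symm
  exact hdvd (Ideal.absNorm_dvd_absNorm_of_le (le_sup_right.trans hle.le))

/-- The number of ideals prime to `𝔪` of prime norm `p ∤ N(𝔪)` is the number of primes of
norm `p`. -/
theorem natCard_coprime_ideal_absNorm_eq_prime {K : Type*} [Field K] [NumberField K]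
    {𝔪 : Ideal (𝓞 K)} {p : ℕ} (hp : p.Prime) (hdvd : ¬ p ∣ Ideal.absNorm 𝔪) :
    Nat.card {I : {I : Ideal (𝓞 K) // I ≠ 0 ∧ I + 𝔪 = ⊤} // Ideal.absNorm I.1 = p} =
      primeCount K p := by
  rw [← natCard_ideal_absNorm_eq_prime hp]
  refine Nat.card_congr ((Equiv.subtypeSubtypeEquivSubtypeInter _ fun I ↦ Ideal.absNorm I = p).trans
    (Equiv.subtypeEquivRight fun I ↦ ⟨fun h ↦ h.2, fun h ↦ ⟨⟨?_, ?_⟩, h⟩⟩))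
  · rintro rfl
    simp [← h, Nat.not_prime_zero] at hp
  · exact add_eq_top_of_absNorm_eq_prime (h ▸ hp) (h ▸ hdvd)

instance finite_coprime_ideal_absNorm_eq {K : Type*} [Field K] [NumberField K]
    (𝔪 : Ideal (𝓞 K)) (n : ℕ) :
    Finite {I : {I : Ideal (𝓞 K) // I ≠ 0 ∧ I + 𝔪 = ⊤} // Ideal.absNorm I.1 = n} :=
  Finite.of_injective (β := {I : {I : Ideal (𝓞 K) // I ≠ 0} // Ideal.absNorm I.1 = n})
    (fun I ↦ ⟨⟨I.1.1, I.1.2.1⟩, I.2⟩) fun _ _ h ↦ by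
      simpa [Subtype.ext_iff] using h

theorem summable_coprime_absNorm_rpow {K : Type*} [Field K] [NumberField K]
    (𝔪 : Ideal (𝓞 K)) {s : ℝ} (hs : 1 < s) :
    Summable fun I : {I : Ideal (𝓞 K) // I ≠ 0 ∧ I + 𝔪 = ⊤} ↦ (Ideal.absNorm I.1 : ℝ) ^ (-s) :=
  (summable_absNorm_rpow hs).comp_injective
    (i := fun I : {I : Ideal (𝓞 K) // I ≠ 0 ∧ I + 𝔪 = ⊤} ↦
      (⟨I.1, I.2.1⟩ : {I : Ideal (𝓞 K) // I ≠ 0}))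
    fun _ _ h ↦ Subtype.ext (Subtype.mk.inj h)

end Comparison

/-- If the zeta functions of the moduli `𝔪` and `𝔫` of the number fields `K` and `L` agree
on `(1, ∞)` (the sums running over nonzero ideals relatively prime to the modulus), then the
Dedekind zeta functions of `K` and `L` agree on `(1, ∞)`. -/
theorem dedekind_zeta_eq_of_modulus_zeta_eq
    (K L : Type*) [Field K] [NumberField K] [Field L] [NumberField L]
    (𝔪 : Ideal (𝓞 K)) (h𝔪 : 𝔪 ≠ 0) (𝔫 : Ideal (𝓞 L)) (h𝔫 : 𝔫 ≠ 0)
    (h : ∀ s : ℝ, 1 < s →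
      (∑' I : {I : Ideal (𝓞 K) // I ≠ 0 ∧ I + 𝔪 = ⊤}, (Ideal.absNorm I.1 : ℝ) ^ (-s)) =
        ∑' J : {J : Ideal (𝓞 L) // J ≠ 0 ∧ J + 𝔫 = ⊤}, (Ideal.absNorm J.1 : ℝ) ^ (-s)) :
    ∀ s : ℝ, 1 < s →
      (∑' I : {I : Ideal (𝓞 K) // I ≠ 0}, (Ideal.absNorm I.1 : ℝ) ^ (-s)) =
        ∑' J : {J : Ideal (𝓞 L) // J ≠ 0}, (Ideal.absNorm J.1 : ℝ) ^ (-s) := by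
  intro s hs
  have hD : Ideal.absNorm 𝔪 * Ideal.absNorm 𝔫 ≠ 0 :=
    mul_ne_zero (absNorm_ne_zero_of_ne_zero ⟨𝔪, h𝔪⟩) (absNorm_ne_zero_of_ne_zero ⟨𝔫, h𝔫⟩)
  refine tsum_absNorm_rpow_eq_of_primeCount_eq
    (primeCount_eq_of_forall_not_dvd hD fun p hp hdvd ↦ ?_) hs
  rw [← natCard_coprime_ideal_absNorm_eq_prime (𝔪 := 𝔪) hp fun hd ↦ hdvd (hd.mul_right _),
    ← natCard_coprime_ideal_absNorm_eq_prime (𝔪 := 𝔫) hp fun hd ↦ hdvd (hd.mul_left _)]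
  exact natCard_fiber_eq_of_tsum_rpow_eq
    (w := fun I : {I : Ideal (𝓞 K) // I ≠ 0 ∧ I + 𝔪 = ⊤} ↦ Ideal.absNorm I.1)
    (v := fun J : {J : Ideal (𝓞 L) // J ≠ 0 ∧ J + 𝔫 = ⊤} ↦ Ideal.absNorm J.1)
    (fun I ↦ absNorm_ne_zero_of_ne_zero ⟨I.1, I.2.1⟩)
    (fun J ↦ absNorm_ne_zero_of_ne_zero ⟨J.1, J.2.1⟩) (fun _ ↦ summable_coprime_absNorm_rpow 𝔪)
    (fun _ ↦ summable_coprime_absNorm_rpow 𝔫) h hp.ne_zero
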